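/- arXiv:2504.17348 — 4 statements merged into one kernel-verified Lean document; each statement's English description precedes it below -/
import Mathlib

section
/- Let F be an algebraically closed field, let t and k be positive integers with 1 ≤ k ≤ t + 1, and set n = 2t + 1. Let S be a finite generating system of the full matrix algebra M_n(F) with m(S) = t + k. Then ℓ(S) ≤ 3n − 5. -/
open Polynomial Matrix

/-- The `F`-linear span of all words over `S` of length at most `i`
(the empty word being `1`). -/
def wordSpan (F : Type*) {A : Type*} [Field F] [Ring A] [Algebra F A]
    (S : Set A) (i : ℕ) : Submodule F A :=
  Submodule.span F {x : A | ∃ l : List A, l.length ≤ i ∧ (∀ a ∈ l, a ∈ S) ∧ l.prod = x}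

/-- `S` is a generating system of the algebra `A`:
`A` is the union of the subspaces `wordSpan F S i`. -/
def IsGeneratingSystem (F : Type*) {A : Type*} [Field F] [Ring A] [Algebra F A]
    (S : Set A) : Prop :=
  ∀ x : A, ∃ i : ℕ, x ∈ wordSpan F S i

/-- The length of a generating system `S`: the least `k` with `wordSpan F S k = ⊤`. -/
noncomputable def genLength (F : Type*) {A : Type*} [Field F] [Ring A] [Algebra F A]
    (S : Set A) : ℕ :=
  sInf {k : ℕ | wordSpan F S k = ⊤}

namespace PazAux
variable {F : Type*} [Field F]

section gen
variable {A : Type*} [Ring A] [Algebra F A] {S : Set A}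

theorem ws_mono {i j : ℕ} (h : i ≤ j) : wordSpan F S i ≤ wordSpan F S j := by
  apply Submodule.span_mono
  rintro x ⟨l, h1, h2, h3⟩
  exact ⟨l, h1.trans h, h2, h3⟩

theorem ws_mul {i j : ℕ} {x y : A} (hx : x ∈ wordSpan F S i) (hy : y ∈ wordSpan F S j) :
    x * y ∈ wordSpan F S (i + j) := by
  have h : wordSpan F S i * wordSpan F S j ≤ wordSpan F S (i + j) := by
    unfold wordSpan
    rw [Submodule.span_mul_span]
    apply Submodule.span_mono
    rintro _ ⟨x, ⟨l, h1, h2, rfl⟩, y, ⟨m, k1, k2, rfl⟩, rfl⟩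
    refine ⟨l ++ m, by simp; omega, ?_, by simp⟩
    intro a ha
    rcases List.mem_append.1 ha with h | h
    · exact h2 a h
    · exact k2 a h
  exact h (Submodule.mul_mem_mul hx hy)

theorem ws_one {i : ℕ} : (1 : A) ∈ wordSpan F S i :=
  Submodule.subset_span ⟨[], by simp, by simp, by simp⟩

theorem ws_mem {a : A} (ha : a ∈ S) : a ∈ wordSpan F S 1 :=
  Submodule.subset_span ⟨[a], by simp, by simpa using ha, by simp⟩

theorem ws_pow {a : A} (ha : a ∈ wordSpan F S 1) (i : ℕ) : a ^ i ∈ wordSpan F S i := by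
  induction i with
  | zero => simpa using ws_one
  | succ i ih => rw [pow_succ]; exact ws_mul ih ha

theorem ws_aeval {a : A} (ha : a ∈ wordSpan F S 1) (p : F[X]) {d : ℕ} (hd : p.natDegree ≤ d) :
    aeval a p ∈ wordSpan F S d := by
  rw [aeval_eq_sum_range]
  apply Submodule.sum_mem
  intro i hi
  apply Submodule.smul_mem
  have := Finset.mem_range.1 hi
  exact ws_mono (by omega) (ws_pow ha i)

theorem ws_zero {x : A} (hx : x ∈ wordSpan F S 0) : ∃ c : F, x = c • 1 := by
  unfold wordSpan at hx
  have : {x : A | ∃ l : List A, l.length ≤ 0 ∧ (∀ a ∈ l, a ∈ S) ∧ l.prod = x} ⊆ {1} := by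
    rintro x ⟨l, h1, h2, rfl⟩
    have : l = [] := by simpa using h1
    simp [this]
  obtain ⟨c, hc⟩ := Submodule.mem_span_singleton.1 (Submodule.span_mono this hx)
  exact ⟨c, hc.symm⟩

/-- left growth -/
theorem ws_succ_left (P : Submodule F A) {i : ℕ} (h1 : (1 : A) ∈ P)
    (h2 : ∀ s ∈ S, ∀ x ∈ wordSpan F S i, s * x ∈ P) : wordSpan F S (i + 1) ≤ P := by
  apply Submodule.span_le.2
  rintro x ⟨l, hl, hS, rfl⟩
  cases l with
  | nil => simpa using h1
  | cons a l =>
    rw [List.prod_cons]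
    refine h2 a (hS a (by simp)) _ (Submodule.subset_span ⟨l, by simpa using hl, ?_, rfl⟩)
    intro b hb; exact hS b (by simp [hb])

theorem ws_succ_right (P : Submodule F A) {i : ℕ} (h1 : (1 : A) ∈ P)
    (h2 : ∀ s ∈ S, ∀ x ∈ wordSpan F S i, x * s ∈ P) : wordSpan F S (i + 1) ≤ P := by
  apply Submodule.span_le.2
  rintro x ⟨l, hl, hS, rfl⟩
  rcases List.eq_nil_or_concat l with rfl | ⟨l, a, rfl⟩
  · simpa using h1
  · rw [List.concat_eq_append, List.prod_append, List.prod_singleton]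
    refine h2 a (hS a (by simp)) _ (Submodule.subset_span ⟨l, by simpa using hl, ?_, rfl⟩)
    intro b hb; exact hS b (by simp [hb])

theorem ws_top [Module.Finite F A] (hg : IsGeneratingSystem F S) : ∃ j, wordSpan F S j = ⊤ := by
  obtain ⟨s, hs⟩ := Module.Finite.fg_top (R := F) (M := A)
  choose f hf using hg
  refine ⟨s.sup f, ?_⟩
  rw [eq_top_iff, ← hs]
  apply Submodule.span_le.2
  intro x hx
  exact ws_mono (Finset.le_sup hx) (hf x)

end gen

/-- abstract growth of a chain of subspaces -/
theorem chain_growth {V : Type*} [AddCommGroup V] [Module F V] [Module.Finite F V]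
    (W : ℕ → Submodule F V) (hm : Monotone W)
    (hs : ∀ i, W (i + 1) ≤ W i → W (i + 2) ≤ W (i + 1)) (ht : ∃ j, W j = ⊤)
    (h0 : W 0 ≠ ⊥) :
    (∀ i, W i ≠ ⊤ → ¬ W (i + 1) ≤ W i) ∧
    (∀ i, W i ≠ ⊤ → i + 1 ≤ Module.finrank F (W i)) := by
  have key : ∀ i, W i ≠ ⊤ → ¬ W (i + 1) ≤ W i := by
    intro i hi h
    have h2 : ∀ j, W (i + j + 1) ≤ W (i + j) := by
      intro j
      induction j with
      | zero => exact h
      | succ j ih => exact hs _ ih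
    have h3 : ∀ j, W (i + j) ≤ W i := by
      intro j
      induction j with
      | zero => exact le_rfl
      | succ j ih => exact (h2 j).trans ih
    obtain ⟨j, hj⟩ := ht
    apply hi
    rw [eq_top_iff, ← hj]
    exact (hm (by omega)).trans (h3 j)
  refine ⟨key, ?_⟩
  intro i
  induction i with
  | zero =>
    intro _
    have := Submodule.one_le_finrank_iff.2 h0
    omega
  | succ i ih =>
    intro hi
    have h1 : W i ≠ ⊤ := fun h => hi (top_le_iff.1 (h ▸ hm (Nat.le_succ i)))
    have h2 := ih h1
    have h3 : W i < W (i + 1) := lt_of_le_not_ge (hm (Nat.le_succ i)) (key i h1)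
    have := Submodule.finrank_lt_finrank_of_lt h3
    omega

theorem chain_top {V : Type*} [AddCommGroup V] [Module F V] [Module.Finite F V]
    (W : ℕ → Submodule F V) (hm : Monotone W)
    (hs : ∀ i, W (i + 1) ≤ W i → W (i + 2) ≤ W (i + 1)) (ht : ∃ j, W j = ⊤)
    (h0 : W 0 ≠ ⊥) : W (Module.finrank F V - 1) = ⊤ := by
  by_contra h
  have h1 := (chain_growth W hm hs ht h0).2 _ h
  have h2 := Submodule.finrank_lt h
  omega

section mat
variable {n : ℕ} {S : Set (Matrix (Fin n) (Fin n) F)}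

/-- columns `L_i u` -/
noncomputable def colW (S : Set (Matrix (Fin n) (Fin n) F)) (u : Fin n → F) (i : ℕ) :
    Submodule F (Fin n → F) :=
  (wordSpan F S i).map ((Matrix.mulVecBilin F F).flip u)

/-- rows `v L_i` -/
noncomputable def rowW (S : Set (Matrix (Fin n) (Fin n) F)) (v : Fin n → F) (i : ℕ) :
    Submodule F (Fin n → F) :=
  (wordSpan F S i).map (Matrix.vecMulBilin F F v)

theorem mem_colW {u x : Fin n → F} {i : ℕ} :
    x ∈ colW S u i ↔ ∃ X ∈ wordSpan F S i, X *ᵥ u = x := by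
  simp [colW]

theorem mem_rowW {u x : Fin n → F} {i : ℕ} :
    x ∈ rowW S u i ↔ ∃ X ∈ wordSpan F S i, u ᵥ* X = x := by
  simp [rowW]
theorem colW_facts [NeZero n] (hg : IsGeneratingSystem F S) {u : Fin n → F} (hu : u ≠ 0) :
    Monotone (colW S u) ∧ (∀ i, colW S u (i + 1) ≤ colW S u i → colW S u (i + 2) ≤ colW S u (i + 1))
    ∧ (∃ j, colW S u j = ⊤) ∧ colW S u 0 ≠ ⊥ := by
  refine ⟨fun i j h => Submodule.map_mono (ws_mono h), ?_, ?_, ?_⟩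
  · intro i h
    refine Submodule.map_le_iff_le_comap.2 (ws_succ_left _ ?_ ?_)
    · exact mem_colW.2 ⟨1, ws_one, by simp⟩
    · intro s hs x hx
      obtain ⟨y, hy, hy2⟩ := mem_colW.1 (h (mem_colW.2 ⟨x, hx, rfl⟩))
      refine mem_colW.2 ⟨s * y, ?_, ?_⟩
      · have := ws_mul (ws_mem (F := F) hs) hy
        rwa [add_comm] at this
      · simp [← Matrix.mulVec_mulVec, hy2]
  · obtain ⟨j, hj⟩ := ws_top hg
    refine ⟨j, ?_⟩
    rw [eq_top_iff]
    intro x _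
    obtain ⟨a, ha⟩ := Function.ne_iff.1 hu
    refine mem_colW.2 ⟨Matrix.vecMulVec x (Pi.single a (u a)⁻¹), by simp [hj], ?_⟩
    rw [Matrix.vecMulVec_mulVec]
    ext b
    simp at ha
    simp [ha]
  · intro h
    apply hu
    have : u ∈ colW S u 0 := mem_colW.2 ⟨1, ws_one, by simp⟩
    simpa [h] using this

theorem rowW_facts [NeZero n] (hg : IsGeneratingSystem F S) {u : Fin n → F} (hu : u ≠ 0) :
    Monotone (rowW S u) ∧ (∀ i, rowW S u (i + 1) ≤ rowW S u i → rowW S u (i + 2) ≤ rowW S u (i + 1))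
    ∧ (∃ j, rowW S u j = ⊤) ∧ rowW S u 0 ≠ ⊥ := by
  refine ⟨fun i j h => Submodule.map_mono (ws_mono h), ?_, ?_, ?_⟩
  · intro i h
    refine Submodule.map_le_iff_le_comap.2 (ws_succ_right _ ?_ ?_)
    · exact mem_rowW.2 ⟨1, ws_one, by simp⟩
    · intro s hs x hx
      obtain ⟨y, hy, hy2⟩ := mem_rowW.1 (h (mem_rowW.2 ⟨x, hx, rfl⟩))
      refine mem_rowW.2 ⟨y * s, ?_, ?_⟩
      · exact ws_mul hy (ws_mem (F := F) hs)
      · simp [← Matrix.vecMul_vecMul, hy2]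
  · obtain ⟨j, hj⟩ := ws_top hg
    refine ⟨j, ?_⟩
    rw [eq_top_iff]
    intro x _
    obtain ⟨a, ha⟩ := Function.ne_iff.1 hu
    refine mem_rowW.2 ⟨Matrix.vecMulVec (Pi.single a (u a)⁻¹) x, by simp [hj], ?_⟩
    rw [Matrix.vecMul_vecMulVec]
    ext b
    simp at ha
    simp [ha]
  · intro h
    apply hu
    have : u ∈ rowW S u 0 := mem_rowW.2 ⟨1, ws_one, by simp⟩
    simpa [h] using this

theorem colW_top [NeZero n] (hg : IsGeneratingSystem F S) {u : Fin n → F} (hu : u ≠ 0) :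
    colW S u (n - 1) = ⊤ := by
  obtain ⟨h1, h2, h3, h4⟩ := colW_facts hg hu
  simpa using chain_top _ h1 h2 h3 h4

theorem rowW_top [NeZero n] (hg : IsGeneratingSystem F S) {u : Fin n → F} (hu : u ≠ 0) :
    rowW S u (n - 1) = ⊤ := by
  obtain ⟨h1, h2, h3, h4⟩ := rowW_facts hg hu
  simpa using chain_top _ h1 h2 h3 h4

/-- A rank one matrix in `L_c` gives an upper bound. -/
theorem top_of_rank_one {a b c : ℕ} {u v : Fin n → F} (hu : colW S u a = ⊤)
    (hv : rowW S v b = ⊤) (hc : Matrix.vecMulVec u v ∈ wordSpan F S c) :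
    wordSpan F S (a + c + b) = ⊤ := by
  rw [eq_top_iff]
  intro M _
  rw [Matrix.matrix_eq_sum_single M]
  refine Submodule.sum_mem _ fun i _ => Submodule.sum_mem _ fun j _ => ?_
  obtain ⟨X, hX, hX2⟩ := mem_colW.1 (show Pi.single i (M i j) ∈ colW S u a by simp [hu])
  obtain ⟨Y, hY, hY2⟩ := mem_rowW.1 (show Pi.single j 1 ∈ rowW S v b by simp [hv])
  have := ws_mul (ws_mul hX hc) hY
  rw [Matrix.mul_vecMulVec, Matrix.vecMulVec_mul, hX2, hY2] at this
  convert this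
  ext p q
  simp [Matrix.single_apply, Matrix.vecMulVec_apply, Pi.single_apply]
  aesop

/-- All left eigenspaces at most one-dimensional. -/
def SimpleLeft (C : Matrix (Fin n) (Fin n) F) : Prop :=
  ∀ (l : F) (v w : Fin n → F), v ᵥ* C = l • v → w ᵥ* C = l • w → v ≠ 0 → ∃ c : F, w = c • v

theorem nd_bound [IsAlgClosed F] [NeZero n] (hg : IsGeneratingSystem F S)
    {C : Matrix (Fin n) (Fin n) F} (hC : C ∈ wordSpan F S 1) (hs : SimpleLeft C) :
    wordSpan F S (2 * n - 2) = ⊤ := by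
  have hn : 0 < n := Nat.pos_of_ne_zero (NeZero.ne n)
  have hpow : ∀ i, C ^ i ∈ wordSpan F S (n - 1) := by
    intro i
    have h1 : aeval C ((X ^ i : F[X]) %ₘ C.charpoly) = C ^ i := by
      have h2 := congrArg (aeval C) (modByMonic_add_div (X ^ i : F[X]) C.charpoly)
      simpa [Matrix.aeval_self_charpoly] using h2
    rw [← h1]
    apply ws_aeval hC
    have h3 := natDegree_modByMonic_lt (X ^ i : F[X]) (C.charpoly_monic) (by
      intro h
      have := C.charpoly_natDegree_eq_dim
      rw [h] at this
      simp at this; omega)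
    rw [C.charpoly_natDegree_eq_dim, Fintype.card_fin] at h3
    omega
  by_contra hne
  obtain ⟨f, hf0, hf⟩ := Submodule.exists_le_ker_of_lt_top _ (lt_top_iff_ne_top.2 hne)
  let P : Submodule F (Matrix (Fin n) (Fin n) F) :=
    { carrier := {Y | ∀ i : ℕ, ∀ X ∈ wordSpan F S (n - 1), Matrix.trace (Y * C ^ i * X) = 0}
      add_mem' := by
        intro a b ha hb i X hX
        simp [add_mul, ha i X hX, hb i X hX]
      zero_mem' := by intro i X _; simp
      smul_mem' := by
        intro c a ha i X hX
        simp [ha i X hX] }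
  have hPC : ∀ Y ∈ P, LinearMap.mulRight F C Y ∈ P := by
    intro Y hY i X hX
    have := hY (i + 1) X hX
    rw [pow_succ'] at this
    simpa [mul_assoc] using this
  have hYf : ∀ X, f X = Matrix.trace ((Matrix.of fun j i => f (Matrix.single i j 1)) * X) := by
    intro X
    conv_lhs => rw [Matrix.matrix_eq_sum_single X]
    simp only [map_sum, Matrix.trace, Matrix.diag, Matrix.mul_apply, Matrix.of_apply]
    rw [Finset.sum_comm]
    refine Finset.sum_congr rfl fun j _ => Finset.sum_congr rfl fun i _ => ?_
    have : Matrix.single i j (X i j) = X i j • Matrix.single i j (1 : F) := by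
      simp [Matrix.smul_single]
    rw [this, map_smul, smul_eq_mul, mul_comm]
  have hYP : (Matrix.of fun j i => f (Matrix.single i j 1)) ∈ P := by
    intro i X hX
    rw [mul_assoc, ← hYf]
    have := ws_mul (hpow i) hX
    exact hf (ws_mono (by omega) this)
  have hY0 : (Matrix.of fun j i => f (Matrix.single i j 1)) ≠ 0 := by
    intro h
    apply hf0
    ext1 X
    rw [hYf, h]; simp
  have : Nontrivial P := ⟨⟨⟨_, hYP⟩, 0, fun h => hY0 (congrArg Subtype.val h)⟩⟩
  obtain ⟨l, hl⟩ := Module.End.exists_eigenvalue ((LinearMap.mulRight F C).restrict hPC)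
  obtain ⟨⟨Y, hY⟩, hYe⟩ := hl.exists_hasEigenvector
  have hYne : Y ≠ 0 := fun h => hYe.2 (Subtype.ext h)
  have hYC : Y * C = l • Y := congrArg Subtype.val hYe.apply_eq_smul
  have hrow : ∀ j, Y j ᵥ* C = l • Y j := by
    intro j
    have := congrFun hYC j
    rw [Matrix.mul_apply_eq_vecMul] at this
    exact this
  obtain ⟨j, hj⟩ := Function.ne_iff.1 hYne
  choose c hc using fun i => hs l (Y j) (Y i) (hrow j) (hrow i) hj
  have hYv : Y = Matrix.vecMulVec c (Y j) := by
    ext a b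
    have := congrFun (hc a) b
    simpa [Matrix.vecMulVec_apply] using this
  have hcj : c j ≠ 0 := by
    intro h
    have := hc j
    rw [h, zero_smul] at this
    exact hj this
  obtain ⟨X, hX, hX2⟩ := mem_rowW.1 (show Pi.single j 1 ∈ rowW S (Y j) (n - 1) by
    simp [rowW_top hg hj])
  have := hY 0 X hX
  rw [pow_zero, mul_one, hYv, Matrix.vecMulVec_mul, hX2, Matrix.trace_vecMulVec] at this
  simp at this
  exact hcj this

/-- cyclic vector implies simple left eigenspaces -/
theorem simple_of_cyclic {C : Matrix (Fin n) (Fin n) F} {u : Fin n → F}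
    (h : Submodule.span F (Set.range fun i : ℕ => C ^ i *ᵥ u) = ⊤) : SimpleLeft C := by
  have key : ∀ (l : F) (v : Fin n → F), v ᵥ* C = l • v → v ⬝ᵥ u = 0 → v = 0 := by
    intro l v hv hvu
    have h1 : ∀ i : ℕ, v ᵥ* C ^ i = l ^ i • v := by
      intro i
      induction i with
      | zero => simp
      | succ i ih => rw [pow_succ, ← Matrix.vecMul_vecMul, ih, Matrix.smul_vecMul, hv, smul_smul,
          pow_succ]
    have h2 : ∀ x : Fin n → F, v ⬝ᵥ x = 0 := by
      intro x
      have hx : x ∈ Submodule.span F (Set.range fun i : ℕ => C ^ i *ᵥ u) := by simp [h]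
      induction hx using Submodule.span_induction with
      | mem x hx =>
        obtain ⟨i, rfl⟩ := hx
        simp only
        rw [Matrix.dotProduct_mulVec, h1, smul_dotProduct, hvu, smul_zero]
      | zero => simp
      | add x y _ _ hx hy => rw [dotProduct_add, hx, hy, add_zero]
      | smul a x _ hx => rw [dotProduct_smul, hx, smul_zero]
    ext i
    simpa using h2 (Pi.single i 1)
  intro l v w hv hw hv0
  have hvu : v ⬝ᵥ u ≠ 0 := fun h => hv0 (key l v hv h)
  refine ⟨(w ⬝ᵥ u) / (v ⬝ᵥ u), ?_⟩
  rw [← sub_eq_zero]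
  apply key l
  · rw [Matrix.sub_vecMul, hw, Matrix.smul_vecMul, hv, smul_sub, smul_comm]
  · rw [sub_dotProduct, smul_dotProduct, smul_eq_mul, div_mul_cancel₀ _ hvu, sub_self]

/-- The Hessenberg argument. -/
theorem exists_cyclic [Infinite F] [NeZero n] (hg : IsGeneratingSystem F S) {u : Fin n → F}
    (hu : u ≠ 0) (hne : colW S u (n - 2) ≠ ⊤) :
    ∃ C ∈ wordSpan F S 1, SimpleLeft C := by
  obtain ⟨h1, h2, h3, h4⟩ := colW_facts hg hu
  obtain ⟨g1, g2⟩ := chain_growth _ h1 h2 h3 h4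
  have htop := colW_top hg hu
  have hnt : ∀ i, i ≤ n - 2 → colW S u i ≠ ⊤ := fun i hi h =>
    hne (top_le_iff.1 (h ▸ h1 hi))
  -- exact dimensions: upper bound
  have hup : ∀ d, d ≤ n - 2 → Module.finrank F (colW S u (n - 2 - d)) + d + 1 ≤ n := by
    intro d
    induction d with
    | zero =>
      intro _
      have := Submodule.finrank_lt hne
      simp at this
      simpa using this
    | succ d ih =>
      intro hd
      have e := ih (by omega)
      have h5 := g1 (n - 2 - (d + 1)) (hnt _ (by omega))
      have h6 : colW S u (n - 2 - (d + 1)) < colW S u (n - 2 - (d + 1) + 1) :=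
        lt_of_le_not_ge (h1 (Nat.le_succ _)) h5
      have h7 := Submodule.finrank_lt_finrank_of_lt h6
      rw [show n - 2 - (d + 1) + 1 = n - 2 - d by omega] at h7
      omega
  have hn2 : 2 ≤ n := by
    by_contra hlt
    rw [show n - 2 = n - 1 by omega] at hne
    exact hne htop
  have hdim : ∀ i, i ≤ n - 1 → Module.finrank F (colW S u i) ≤ i + 1 := by
    intro i hi
    rcases Nat.lt_or_ge (n - 2) i with h | h
    · have := Submodule.finrank_le (colW S u i)
      simp at this
      omega
    · have := hup (n - 2 - i) (by omega)
      rw [show n - 2 - (n - 2 - i) = i by omega] at this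
      omega
  -- the bad subspaces
  let Q : Fin (n - 1) → Submodule F (wordSpan F S 1) := fun i =>
    { carrier := {C | ∀ x ∈ colW S u i, C.1 *ᵥ x ∈ colW S u i}
      add_mem' := by
        intro a b ha hb x hx
        have := add_mem (ha x hx) (hb x hx)
        simpa [Matrix.add_mulVec] using this
      zero_mem' := by intro x _; simp
      smul_mem' := by
        intro c a ha x hx
        have := Submodule.smul_mem _ c (ha x hx)
        simpa [Matrix.smul_mulVec] using this }
  have hQ : ∀ i, Q i ≠ ⊤ := by
    intro i hi
    apply g1 i (hnt i (by omega))
    refine Submodule.map_le_iff_le_comap.2 (ws_succ_left _ ?_ ?_)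
    · exact mem_colW.2 ⟨1, ws_one, by simp⟩
    · intro s hs x hx
      have : (⟨s, ws_mem hs⟩ : wordSpan F S 1) ∈ Q i := by simp [hi]
      have := this (x *ᵥ u) (mem_colW.2 ⟨x, hx, rfl⟩)
      simpa using this
  have hcov : ⋃ i, (Q i : Set (wordSpan F S 1)) ≠ Set.univ := by
    intro h
    obtain ⟨i, hi⟩ := Subspace.exists_eq_top_of_iUnion_eq_univ h
    exact hQ i hi
  obtain ⟨⟨C, hC⟩, hCQ⟩ := (Set.ne_univ_iff_exists_notMem _).1 hcov
  simp only [Set.mem_iUnion, not_exists] at hCQ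
  refine ⟨C, hC, simple_of_cyclic (u := u) ?_⟩
  set K := Submodule.span F (Set.range fun i : ℕ => C ^ i *ᵥ u) with hK
  have hKC : ∀ x ∈ K, C *ᵥ x ∈ K := by
    intro x hx
    induction hx using Submodule.span_induction with
    | mem x hx =>
      obtain ⟨i, rfl⟩ := hx
      refine Submodule.subset_span ⟨i + 1, ?_⟩
      simp [pow_succ']
    | zero => simp
    | add x y _ _ hx hy => rw [Matrix.mulVec_add]; exact add_mem hx hy
    | smul a x _ hx => rw [Matrix.mulVec_smul]; exact Submodule.smul_mem _ _ hx
  have hWK : ∀ i, i ≤ n - 1 → colW S u i ≤ K := by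
    intro i
    induction i with
    | zero =>
      intro _ x hx
      obtain ⟨X, hX, rfl⟩ := mem_colW.1 hx
      obtain ⟨c, rfl⟩ := ws_zero hX
      rw [Matrix.smul_mulVec]
      exact Submodule.smul_mem _ _ (Submodule.subset_span ⟨0, by simp⟩)
    | succ i ih =>
      intro hi
      have ihi := ih (by omega)
      have hb : ¬ ∀ x ∈ colW S u i, C *ᵥ x ∈ colW S u i := hCQ ⟨i, by omega⟩
      push Not at hb
      obtain ⟨x, hx, hCx⟩ := hb
      have hCx2 : C *ᵥ x ∈ colW S u (i + 1) := by
        obtain ⟨X, hX, rfl⟩ := mem_colW.1 hx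
        refine mem_colW.2 ⟨C * X, ?_, by simp⟩
        rw [add_comm]; exact ws_mul hC hX
      have hle : colW S u i ⊔ Submodule.span F {C *ᵥ x} ≤ colW S u (i + 1) :=
        sup_le (h1 (Nat.le_succ i)) (by simpa using hCx2)
      have hlt : colW S u i < colW S u i ⊔ Submodule.span F {C *ᵥ x} := by
        refine lt_of_le_not_ge le_sup_left fun h => hCx (h ?_)
        exact Submodule.mem_sup_right (Submodule.mem_span_singleton_self _)
      have hd1 := Submodule.finrank_lt_finrank_of_lt hlt
      have hd2 := g2 i (hnt i (by omega))
      have hd3 := hdim (i + 1) hi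
      have heq := Submodule.eq_of_le_of_finrank_le hle (by omega)
      rw [← heq]
      exact sup_le ihi (by simpa using hKC x (ihi hx))
  exact top_le_iff.1 (htop ▸ hWK (n - 1) le_rfl)

theorem rank_step (D Q R : Matrix (Fin n) (Fin n) F) (h : D * (Q * R) = 0) :
    (D * Q).rank + (Q * R).rank ≤ Q.rank := by
  have h1 := LinearMap.finrank_range_add_finrank_ker
    (D.mulVecLin.domRestrict (LinearMap.range Q.mulVecLin))
  have h2 : LinearMap.range (D.mulVecLin.domRestrict (LinearMap.range Q.mulVecLin)) =
      LinearMap.range (D * Q).mulVecLin := by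
    rw [LinearMap.range_domRestrict, Matrix.mulVecLin_mul, LinearMap.range_comp]
  have h3 : (Q * R).rank ≤ Module.finrank F
      (LinearMap.ker (D.mulVecLin.domRestrict (LinearMap.range Q.mulVecLin))) := by
    rw [← Submodule.finrank_map_subtype_eq]
    apply Submodule.finrank_mono
    rintro _ ⟨x, rfl⟩
    refine ⟨⟨(Q * R).mulVecLin x, ⟨R *ᵥ x, by simp⟩⟩, ?_, rfl⟩
    simp only [SetLike.mem_coe, LinearMap.mem_ker, LinearMap.domRestrict_apply,
      Matrix.mulVecLin_apply, Matrix.mulVec_mulVec, h, Matrix.zero_mulVec]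
  rw [h2] at h1
  change (D * Q).rank + _ = Q.rank at h1
  omega

theorem rank_lower [IsAlgClosed F] (A : Matrix (Fin n) (Fin n) F) (c : ℕ)
    (h : ∀ (l : F) (p : F[X]), minpoly F A = p * (X - Polynomial.C l) → c ≤ (aeval A p).rank) :
    ∀ (d : ℕ) (q r : F[X]), minpoly F A = q * r → r.natDegree = d → c * d ≤ (aeval A q).rank := by
  intro d
  induction d with
  | zero => intros; simp
  | succ d ih =>
    intro q r hqr hd
    obtain ⟨l, hl⟩ := IsAlgClosed.exists_root r (by
      intro h0
      have := natDegree_eq_zero_iff_degree_le_zero.2 h0.le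
      omega)
    obtain ⟨rr, rfl⟩ := dvd_iff_isRoot.2 hl
    have hrne : rr ≠ 0 := by rintro rfl; simp at hd
    rw [natDegree_mul (X_sub_C_ne_zero l) hrne, natDegree_X_sub_C] at hd
    have e1 := ih ((X - Polynomial.C l) * q) rr (by rw [hqr]; ring) (by omega)
    have e2 := h l (q * rr) (by rw [hqr]; ring)
    have e3 := rank_step (aeval A (X - Polynomial.C l)) (aeval A q) (aeval A rr) (by
      rw [← map_mul, ← map_mul,
        show (X - Polynomial.C l) * (q * rr) = q * ((X - Polynomial.C l) * rr) by ring, ← hqr,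
        minpoly.aeval])
    rw [map_mul] at e1 e2
    rw [mul_add, mul_one]
    omega

theorem aeval_cofactor_ne_zero (A : Matrix (Fin n) (Fin n) F) {l : F} {p : F[X]}
    (hp : minpoly F A = p * (X - Polynomial.C l)) :
    aeval A p ≠ 0 ∧ p.natDegree + 1 = (minpoly F A).natDegree := by
  have hA : IsIntegral F A := Matrix.isIntegral A
  have hp0 : p ≠ 0 := by
    rintro rfl
    exact minpoly.ne_zero hA (by simpa using hp)
  have hd : p.natDegree + 1 = (minpoly F A).natDegree := by
    rw [hp, natDegree_mul hp0 (X_sub_C_ne_zero l), natDegree_X_sub_C]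
  refine ⟨fun h => ?_, hd⟩
  have := natDegree_le_natDegree (minpoly.degree_le_of_ne_zero F A hp0 h)
  omega

theorem rank_pos_of_ne {M : Matrix (Fin n) (Fin n) F} (h : M ≠ 0) : 1 ≤ M.rank := by
  rw [Nat.one_le_iff_ne_zero]
  intro h0
  have h1 := LinearMap.range_eq_bot.1 (Submodule.finrank_eq_zero.1 h0)
  apply h
  ext i j
  have := congrFun (LinearMap.congr_fun h1 (Pi.single j 1)) i
  simpa using this

theorem exists_vecMulVec {M : Matrix (Fin n) (Fin n) F} (h : M.rank ≤ 1) (h0 : M ≠ 0) :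
    ∃ u v : Fin n → F, u ≠ 0 ∧ v ≠ 0 ∧ M = Matrix.vecMulVec u v := by
  obtain ⟨⟨u, hu⟩, hc⟩ := finrank_le_one_iff.1 h
  choose c hc using hc
  have hM : M = Matrix.vecMulVec u
      (fun j => c ⟨M.mulVecLin (Pi.single j 1), ⟨_, rfl⟩⟩) := by
    ext i j
    have := congrFun (congrArg Subtype.val (hc ⟨M.mulVecLin (Pi.single j 1), ⟨_, rfl⟩⟩)) i
    simp at this
    rw [Matrix.vecMulVec_apply, mul_comm]
    simp [this]
  refine ⟨u, _, ?_, ?_, hM⟩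
  · rintro rfl; exact h0 (by rw [hM]; simp)
  · intro hv
    rw [hv] at hM
    exact h0 (by rw [hM]; simp)

/-- Minimal polynomial of degree larger than `n / 2` gives a rank one matrix. -/
theorem exists_rank_one [IsAlgClosed F] (A : Matrix (Fin n) (Fin n) F)
    (h : n < 2 * (minpoly F A).natDegree) :
    ∃ (u v : Fin n → F) (p : F[X]), u ≠ 0 ∧ v ≠ 0 ∧
      p.natDegree + 1 = (minpoly F A).natDegree ∧ aeval A p = Matrix.vecMulVec u v := by
  by_contra hcon
  have := rank_lower A 2 (by
    intro l p hp
    by_contra hlt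
    obtain ⟨h1, h2⟩ := aeval_cofactor_ne_zero A hp
    obtain ⟨u, v, hu, hv, he⟩ := exists_vecMulVec (by omega) h1
    exact hcon ⟨u, v, p, hu, hv, h2, he⟩) _ 1 (minpoly F A) (by simp) rfl
  have h2 := (aeval A (1 : F[X])).rank_le_width
  omega

theorem simple_of_minpoly [IsAlgClosed F] (A : Matrix (Fin n) (Fin n) F)
    (h : (minpoly F A).natDegree = n) : SimpleLeft A := by
  intro l v w hv hw hv0
  have hroot : (minpoly F A).IsRoot l := by
    have h1 : ∀ p : F[X], v ᵥ* aeval A p = p.eval l • v := by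
      intro p
      induction p using Polynomial.induction_on' with
      | add p q hp hq => simp [Matrix.vecMul_add, hp, hq, add_smul]
      | monomial i a =>
        have h1 : ∀ i : ℕ, v ᵥ* A ^ i = l ^ i • v := by
          intro i
          induction i with
          | zero => simp
          | succ i ih => rw [pow_succ, ← Matrix.vecMul_vecMul, ih, Matrix.smul_vecMul, hv,
              smul_smul, pow_succ]
        rw [aeval_monomial, eval_monomial, ← Algebra.smul_def, Matrix.vecMul_smul, h1, smul_smul]
    have h2 := h1 (minpoly F A)
    rw [minpoly.aeval, Matrix.vecMul_zero] at h2
    exact (smul_eq_zero.1 h2.symm).resolve_right hv0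
  obtain ⟨r, hr⟩ := dvd_iff_isRoot.2 hroot
  have hrne : r ≠ 0 := by
    rintro rfl
    exact minpoly.ne_zero (Matrix.isIntegral A) (by simpa using hr)
  have hd : r.natDegree + 1 = n := by
    rw [← h, hr, natDegree_mul (X_sub_C_ne_zero l) hrne, natDegree_X_sub_C, add_comm]
  have hrk := rank_lower A 1 (fun l p hp => rank_pos_of_ne (aeval_cofactor_ne_zero A hp).1) _
    _ r hr rfl
  set D := aeval A (X - Polynomial.C l) with hD
  have hDe : D = A - l • 1 := by
    rw [hD]; simp [Algebra.algebraMap_eq_smul_one]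
  rw [← Matrix.rank_transpose] at hrk
  have h1 := LinearMap.finrank_range_add_finrank_ker (Dᵀ).mulVecLin
  change Dᵀ.rank + _ = _ at h1
  rw [Module.finrank_fin_fun] at h1
  have hker : ∀ x : Fin n → F, x ᵥ* A = l • x → x ∈ LinearMap.ker (Dᵀ).mulVecLin := by
    intro x hx
    rw [LinearMap.mem_ker, Matrix.mulVecLin_apply, Matrix.mulVec_transpose, hDe, Matrix.vecMul_sub,
      hx, Matrix.vecMul_smul, Matrix.vecMul_one, sub_self]
  obtain ⟨⟨e, he⟩, hce⟩ := finrank_le_one_iff.1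
    (show Module.finrank F (LinearMap.ker (Dᵀ).mulVecLin) ≤ 1 by omega)
  obtain ⟨a, ha⟩ := hce ⟨v, hker v hv⟩
  obtain ⟨b, hb⟩ := hce ⟨w, hker w hw⟩
  have ha := congrArg Subtype.val ha
  have hb := congrArg Subtype.val hb
  simp only [SetLike.val_smul] at ha hb
  have ha0 : a ≠ 0 := by
    rintro rfl
    exact hv0 (by rw [← ha]; simp)
  refine ⟨b / a, ?_⟩
  rw [← ha, ← hb, smul_smul, div_mul_cancel₀ _ ha0]

end mat
end PazAux

theorem length_le_of_minpoly_deg_gt_half_odd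
    (F : Type*) [Field F] [IsAlgClosed F] (t k n : ℕ)
    (ht : 0 < t) (hk1 : 1 ≤ k) (hk2 : k ≤ t + 1) (hn : n = 2 * t + 1)
    (S : Finset (Matrix (Fin n) (Fin n) F))
    (hgen : IsGeneratingSystem F (S : Set (Matrix (Fin n) (Fin n) F)))
    (hm : S.sup (fun M => (minpoly F M).natDegree) = t + k) :
    genLength F (S : Set (Matrix (Fin n) (Fin n) F)) ≤ 3 * n - 5 := by
  have : NeZero n := ⟨by omega⟩
  suffices h : ∃ j, j ≤ 3 * n - 5 ∧ wordSpan F (S : Set (Matrix (Fin n) (Fin n) F)) j = ⊤ by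
    obtain ⟨j, hj, hj2⟩ := h
    exact (Nat.sInf_le (show j ∈ {k : ℕ | wordSpan F _ k = ⊤} from hj2)).trans hj
  have hSne : S.Nonempty := by
    rw [Finset.nonempty_iff_ne_empty]
    rintro rfl
    simp at hm
    omega
  obtain ⟨A, hA, hAm⟩ := Finset.exists_mem_eq_sup S hSne (fun M => (minpoly F M).natDegree)
  rw [hm] at hAm
  have hA1 : A ∈ wordSpan F (S : Set (Matrix (Fin n) (Fin n) F)) 1 := PazAux.ws_mem hA
  by_cases hmn : (minpoly F A).natDegree = n
  · exact ⟨2 * n - 2, by omega, PazAux.nd_bound hgen hA1 (PazAux.simple_of_minpoly A hmn)⟩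
  obtain ⟨u, v, p, hu, hv, hpd, hp⟩ := PazAux.exists_rank_one A (by omega)
  by_cases hcol : PazAux.colW (S : Set (Matrix (Fin n) (Fin n) F)) u (n - 2) = ⊤
  · have hE := PazAux.ws_aeval hA1 p le_rfl
    rw [hp] at hE
    exact ⟨_, by omega, PazAux.top_of_rank_one hcol (PazAux.rowW_top hgen hv) hE⟩
  · obtain ⟨C, hC, hCs⟩ := PazAux.exists_cyclic hgen hu hcol
    exact ⟨2 * n - 2, by omega, PazAux.nd_bound hgen hC hCs⟩
end

section
/- Let F be an algebraically closed field and let n, t be positive integers with 2t ≤ n ≤ 3t − 1. Let S be a finite generating system of the full matrix algebra M_n(F) with m(S) = t. Then 2·ℓ(S) ≤ 7n − 8 (i.e., ℓ(S) ≤ 7n/2 − 4). -/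
open Polynomial Matrix

/-- Word spans multiply by adding lengths. -/
theorem wordSpan_mul {F A : Type*} [Field F] [Ring A] [Algebra F A] (S : Set A) (i j : ℕ) :
    wordSpan F S i * wordSpan F S j = wordSpan F S (i + j) := by
  apply le_antisymm
  · unfold wordSpan
    rw [Submodule.span_mul_span]
    apply Submodule.span_mono
    rintro _ ⟨x, ⟨l, hl, hS, rfl⟩, y, ⟨l', hl', hS', rfl⟩, rfl⟩
    refine ⟨l ++ l', by simp; omega, ?_, by simp⟩
    intro a ha
    rcases List.mem_append.1 ha with h | h
    · exact hS a h
    · exact hS' a h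
  · unfold wordSpan
    rw [Submodule.span_mul_span]
    apply Submodule.span_mono
    rintro _ ⟨l, hl, hS, rfl⟩
    refine ⟨(l.take i).prod, ⟨l.take i, by simp, fun a ha => hS a (List.mem_of_mem_take ha), rfl⟩,
      (l.drop i).prod, ⟨l.drop i, by simp; omega, fun a ha => hS a (List.mem_of_mem_drop ha), rfl⟩,
      ?_⟩
    simp

theorem wordSpan_mono {F A : Type*} [Field F] [Ring A] [Algebra F A] (S : Set A) :
    Monotone (wordSpan F S) := by
  intro i j hij
  apply Submodule.span_mono
  rintro _ ⟨l, hl, hS, rfl⟩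
  exact ⟨l, hl.trans hij, hS, rfl⟩

theorem one_mem_wordSpan {F A : Type*} [Field F] [Ring A] [Algebra F A] (S : Set A) (i : ℕ) :
    (1 : A) ∈ wordSpan F S i :=
  Submodule.subset_span ⟨[], by simp, by simp, rfl⟩

theorem pow_mem_wordSpan {F A : Type*} [Field F] [Ring A] [Algebra F A] (S : Set A) {a : A}
    (ha : a ∈ S) (i : ℕ) : a ^ i ∈ wordSpan F S i :=
  Submodule.subset_span ⟨List.replicate i a, by simp, by
    intro b hb
    rw [List.eq_of_mem_replicate hb]; exact ha, by simp⟩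

theorem aeval_mem_wordSpan {F A : Type*} [Field F] [Ring A] [Algebra F A] (S : Set A) {a : A}
    (ha : a ∈ S) (p : F[X]) : aeval a p ∈ wordSpan F S p.natDegree := by
  rw [aeval_eq_sum_range]
  refine Submodule.sum_mem _ fun i hi => Submodule.smul_mem _ _ ?_
  exact wordSpan_mono S (by simpa [Nat.lt_succ_iff] using hi) (pow_mem_wordSpan S ha i)

/-- Growth of a chain of subspaces. -/
theorem chain_growth {F V : Type*} [Field F] [AddCommGroup V] [Module F V]
    [FiniteDimensional F V] (W : ℕ → Submodule F V) (hmono : Monotone W) (h0 : W 0 ≠ ⊥)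
    (hstab : ∀ i, W (i + 1) = W i → W (i + 2) = W (i + 1)) (i : ℕ) :
    i + 1 ≤ Module.finrank F (W i) ∨ ∀ k, W k ≤ W i := by
  induction i with
  | zero => 
    left
    have := (Submodule.one_le_finrank_iff (S := W 0)).2 h0
    omega
  | succ i ih =>
    rcases ih with h | h
    · by_cases he : W (i + 1) = W i
      · right
        have hall : ∀ k, W (i + 1 + k) = W (i + k) := by
          intro k
          induction k with
          | zero => exact he
          | succ k ihk =>
            have := hstab (i + k) (by rw [← ihk]; congr 1; omega)
            rw [show i + 1 + (k + 1) = i + k + 2 by omega, this]; congr 1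
        have hall2 : ∀ k, W (i + k) = W i := by
          intro k
          induction k with
          | zero => rfl
          | succ k ihk => rw [← ihk, ← hall k]; congr 1; omega
        intro k
        calc W k ≤ W (i + k) := hmono (by omega)
          _ = W (i + 1) := by rw [hall2, he]
      · left
        have hlt : W i < W (i + 1) := lt_of_le_of_ne (hmono (by omega)) (Ne.symm he)
        have := Submodule.finrank_lt_finrank_of_lt hlt
        omega
    · right
      exact fun k => (h k).trans (hmono (by omega))

theorem left_growth {F A : Type*} [Field F] [Ring A] [Algebra F A] [FiniteDimensional F A]
    (S : Set A) (hgen : IsGeneratingSystem F S) (B : A) (hB : B ≠ 0) (i : ℕ) :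
    i + 1 ≤ Module.finrank F ↥(wordSpan F S i * Submodule.span F {B}) ∨
      wordSpan F S i * Submodule.span F {B} = ⊤ * Submodule.span F {B} := by
  rcases chain_growth (fun i => wordSpan F S i * Submodule.span F {B})
    (fun i j h => mul_le_mul' (wordSpan_mono S h) le_rfl) (by
      intro h
      have h1 : (1 : A) * B ∈ wordSpan F S 0 * Submodule.span F {B} :=
        Submodule.mul_mem_mul (one_mem_wordSpan S 0) (Submodule.mem_span_singleton_self B)
      change _ = (⊥ : Submodule F A) at h
      rw [h] at h1
      simp at h1
      exact hB h1) (by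
      intro i h
      rw [show i + 2 = 1 + (i + 1) by omega, ← wordSpan_mul S 1 (i+1), mul_assoc, h, ← mul_assoc,
        wordSpan_mul, add_comm 1 i, h]) i with h | h
  · exact Or.inl h
  · right
    apply le_antisymm
    · exact mul_le_mul' le_top le_rfl
    · rw [Submodule.mul_le]
      intro x _ y hy
      obtain ⟨k, hk⟩ := hgen x
      exact h k (Submodule.mul_mem_mul hk hy)

theorem right_growth {F A : Type*} [Field F] [Ring A] [Algebra F A] [FiniteDimensional F A]
    (S : Set A) (hgen : IsGeneratingSystem F S) (B : A) (hB : B ≠ 0) (i : ℕ) :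
    i + 1 ≤ Module.finrank F ↥(Submodule.span F {B} * wordSpan F S i) ∨
      Submodule.span F {B} * wordSpan F S i = Submodule.span F {B} * ⊤ := by
  rcases chain_growth (fun i => Submodule.span F {B} * wordSpan F S i)
    (fun i j h => mul_le_mul' le_rfl (wordSpan_mono S h)) (by
      intro h
      have h1 : B * (1 : A) ∈ Submodule.span F {B} * wordSpan F S 0 :=
        Submodule.mul_mem_mul (Submodule.mem_span_singleton_self B) (one_mem_wordSpan S 0)
      change _ = (⊥ : Submodule F A) at h
      rw [h] at h1
      simp at h1
      exact hB h1) (by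
      intro i h
      rw [← wordSpan_mul S (i+1) 1, ← mul_assoc, h, mul_assoc, wordSpan_mul, h]) i with h | h
  · exact Or.inl h
  · right
    apply le_antisymm
    · exact mul_le_mul' le_rfl le_top
    · rw [Submodule.mul_le]
      intro x hx y _
      obtain ⟨k, hk⟩ := hgen y
      exact h k (Submodule.mul_mem_mul hx hk)

/-- A nonzero matrix generates everything as a two-sided ideal. -/
theorem top_mul_span_mul_top {F : Type*} [Field F] {n : ℕ} (w : Matrix (Fin n) (Fin n) F)
    (hw : w ≠ 0) :
    (⊤ : Submodule F (Matrix (Fin n) (Fin n) F)) * Submodule.span F {w} * ⊤ = ⊤ := by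
  obtain ⟨i, j, hij⟩ : ∃ i j, w i j ≠ 0 := by
    by_contra! h
    exact hw (by ext i j; simpa using h i j)
  rw [eq_top_iff]
  rintro M -
  rw [Matrix.matrix_eq_sum_single M]
  refine Submodule.sum_mem _ fun a _ => Submodule.sum_mem _ fun b _ => ?_
  have : Matrix.single a b (M a b)
      = (Matrix.single a i (M a b * (w i j)⁻¹) * w) * Matrix.single j b 1 := by
    rw [Matrix.single_mul_mul_single]
    congr 1
    field_simp
  rw [this]
  exact Submodule.mul_mem_mul (Submodule.mul_mem_mul trivial
    (Submodule.mem_span_singleton_self w)) trivial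

/-- If a rank one matrix lies in `L_k` then the length is at most `k + 2n - 2`. -/
theorem wordSpan_top_of_rank_one {F : Type*} [Field F] {n : ℕ} (hn : 0 < n)
    (S : Set (Matrix (Fin n) (Fin n) F)) (hgen : IsGeneratingSystem F S) (u v : Fin n → F)
    (k : ℕ) (hw : vecMulVec u v ≠ 0) (hk : vecMulVec u v ∈ wordSpan F S k) :
    wordSpan F S ((n - 1) + k + (n - 1)) = ⊤ := by
  set w := vecMulVec u v with hwdef
  have hl : wordSpan F S (n - 1) * Submodule.span F {w} = ⊤ * Submodule.span F {w} := by
    rcases left_growth S hgen w hw (n - 1) with h | h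
    · apply Submodule.eq_of_le_of_finrank_le (mul_le_mul' le_top le_rfl)
      refine le_trans ?_ h
      let f : (Fin n → F) →ₗ[F] Matrix (Fin n) (Fin n) F :=
        { toFun := fun x => vecMulVec x v
          map_add' := fun x y => Matrix.add_vecMulVec x y v
          map_smul' := fun c x => Matrix.smul_vecMulVec c x v }
      have hle : (⊤ : Submodule F (Matrix (Fin n) (Fin n) F)) * Submodule.span F {w}
          ≤ LinearMap.range f := by
        rw [Submodule.mul_le]
        intro x _ y hy
        obtain ⟨c, rfl⟩ := Submodule.mem_span_singleton.1 hy
        refine ⟨c • (x *ᵥ u), ?_⟩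
        change vecMulVec _ _ = _
        rw [hwdef, Matrix.smul_vecMulVec, Matrix.mul_smul, Matrix.mul_vecMulVec]
      calc _ ≤ Module.finrank F (LinearMap.range f) := Submodule.finrank_mono hle
        _ ≤ Module.finrank F (Fin n → F) := LinearMap.finrank_range_le f
        _ = n - 1 + 1 := by simp; omega
    · exact h
  have hr : Submodule.span F {w} * wordSpan F S (n - 1) = Submodule.span F {w} * ⊤ := by
    rcases right_growth S hgen w hw (n - 1) with h | h
    · apply Submodule.eq_of_le_of_finrank_le (mul_le_mul' le_rfl le_top)
      refine le_trans ?_ h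
      let f : (Fin n → F) →ₗ[F] Matrix (Fin n) (Fin n) F :=
        { toFun := fun x => vecMulVec u x
          map_add' := fun x y => Matrix.vecMulVec_add u x y
          map_smul' := fun c x => Matrix.vecMulVec_smul c u x }
      have hle : Submodule.span F {w} * (⊤ : Submodule F (Matrix (Fin n) (Fin n) F))
          ≤ LinearMap.range f := by
        rw [Submodule.mul_le]
        intro y hy x _
        obtain ⟨c, rfl⟩ := Submodule.mem_span_singleton.1 hy
        refine ⟨c • (v ᵥ* x), ?_⟩
        change vecMulVec _ _ = _
        rw [hwdef, Matrix.vecMulVec_smul, Matrix.smul_mul, Matrix.vecMulVec_mul]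
      calc _ ≤ Module.finrank F (LinearMap.range f) := Submodule.finrank_mono hle
        _ ≤ Module.finrank F (Fin n → F) := LinearMap.finrank_range_le f
        _ = n - 1 + 1 := by simp; omega
    · exact h
  rw [eq_top_iff, ← top_mul_span_mul_top w hw, ← hl, mul_assoc, ← hr, ← mul_assoc,
    ← wordSpan_mul, ← wordSpan_mul]
  have hle : Submodule.span F {w} ≤ wordSpan F S k := by
    rw [Submodule.span_le]; simpa using hk
  exact mul_le_mul' (mul_le_mul' le_rfl hle) le_rfl

/-- A space of dimension at least `n` of matrices `x v₁ᵀ + y v₂ᵀ` contains a rank one matrix. -/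
theorem exists_rank_one {F : Type*} [Field F] [IsAlgClosed F] {n : ℕ} (hn : 0 < n)
    (W : Submodule F (Matrix (Fin n) (Fin n) F)) (hW : n ≤ Module.finrank F W)
    (v₁ v₂ : Fin n → F) (h : ∀ w ∈ W, ∃ x y, w = vecMulVec x v₁ + vecMulVec y v₂) :
    ∃ u v, vecMulVec u v ≠ 0 ∧ vecMulVec u v ∈ W := by
  let f : ((Fin n → F) × (Fin n → F)) →ₗ[F] Matrix (Fin n) (Fin n) F :=
    { toFun := fun x => vecMulVec x.1 v₁ + vecMulVec x.2 v₂
      map_add' := fun x y => by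
        simp only [Prod.fst_add, Prod.snd_add, Matrix.add_vecMulVec]; abel
      map_smul' := fun c x => by simp [Matrix.smul_vecMulVec] }
  obtain ⟨g, hg⟩ := LinearMap.exists_rightInverse_of_surjective f.rangeRestrict
    (LinearMap.range_rangeRestrict f)
  have hWf : W ≤ LinearMap.range f := by
    intro w hw
    obtain ⟨x, y, rfl⟩ := h w hw
    exact ⟨(x, y), rfl⟩
  let s : W →ₗ[F] (Fin n → F) × (Fin n → F) := g ∘ₗ Submodule.inclusion hWf
  have hs : ∀ w : W, (w : Matrix (Fin n) (Fin n) F)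
      = vecMulVec (s w).1 v₁ + vecMulVec (s w).2 v₂ := by
    intro w
    have := LinearMap.congr_fun hg (Submodule.inclusion hWf w)
    exact (congrArg Subtype.val this).symm
  let X : W →ₗ[F] (Fin n → F) := LinearMap.fst F _ _ ∘ₗ s
  let Y : W →ₗ[F] (Fin n → F) := LinearMap.snd F _ _ ∘ₗ s
  by_cases hY : Function.Injective Y
  · have hfr : Module.finrank F W = Module.finrank F (Fin n → F) :=
      le_antisymm (LinearMap.finrank_le_finrank_of_injective hY) (by simpa using hW)
    let e := LinearEquiv.ofInjectiveOfFinrankEq Y hY hfr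
    have : Nonempty (Fin n) := ⟨⟨0, hn⟩⟩
    obtain ⟨μ, hμ⟩ := Module.End.exists_eigenvalue
      (X ∘ₗ (e.symm : (Fin n → F) →ₗ[F] W) : Module.End F (Fin n → F))
    obtain ⟨z, hz⟩ := hμ.exists_hasEigenvector
    have hz1 : X (e.symm z) = μ • z := hz.apply_eq_smul
    have hz2 : Y (e.symm z) = z := e.apply_symm_apply z
    have hw := hs (e.symm z)
    have hw' : ((e.symm z : W) : Matrix (Fin n) (Fin n) F) = vecMulVec z (μ • v₁ + v₂) := by
      rw [hw]
      change vecMulVec (X (e.symm z)) v₁ + vecMulVec (Y (e.symm z)) v₂ = _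
      rw [hz1, hz2, Matrix.vecMulVec_add, Matrix.vecMulVec_smul, Matrix.smul_vecMulVec]
    refine ⟨z, μ • v₁ + v₂, ?_, ?_⟩
    · rw [← hw']
      intro h0
      have : e.symm z = 0 := Subtype.ext h0
      exact hz.2 (by simpa using this)
    · rw [← hw']; exact (e.symm z).2
  · rw [← LinearMap.ker_eq_bot, Submodule.eq_bot_iff] at hY
    push Not at hY
    obtain ⟨w, hw, hw0⟩ := hY
    have hw1 := hs w
    have hw2 : (s w).2 = 0 := hw
    rw [hw2, Matrix.zero_vecMulVec, add_zero] at hw1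
    refine ⟨(s w).1, v₁, ?_, ?_⟩
    · rw [← hw1]; simpa using hw0
    · rw [← hw1]; exact w.2

/-- A matrix of rank at most two is a sum of two outer products. -/
theorem rank_two_decomp {F : Type*} [Field F] {n : ℕ} (B : Matrix (Fin n) (Fin n) F)
    (hB : Module.finrank F (LinearMap.range (Matrix.toLin' B)) ≤ 2) :
    ∃ u₁ v₁ u₂ v₂, B = vecMulVec u₁ v₁ + vecMulVec u₂ v₂ := by
  have b := Module.finBasis F (LinearMap.range (Matrix.toLin' B))
  obtain ⟨p, hp⟩ : ∃ p : (Fin 2 → F) →ₗ[F] (LinearMap.range (Matrix.toLin' B)),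
      Function.Surjective p := by
    have : Module.finrank F (LinearMap.range (Matrix.toLin' B)) ≤ Module.finrank F (Fin 2 → F) := by
      simpa using hB
    obtain ⟨i, hi⟩ : ∃ i : (LinearMap.range (Matrix.toLin' B)) →ₗ[F] (Fin 2 → F),
        Function.Injective i := by
      rw [← finrank_le_iff_exists_linearMap]
      exact this
    obtain ⟨p, hp⟩ := LinearMap.exists_leftInverse_of_injective i (LinearMap.ker_eq_bot.2 hi)
    exact ⟨p, fun x => ⟨i x, LinearMap.congr_fun hp x⟩⟩
  have hcol : ∀ j, ∃ c : Fin 2 → F, ((p c : LinearMap.range (Matrix.toLin' B)) : Fin n → F)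
      = fun i => B i j := by
    intro j
    obtain ⟨c, hc⟩ := hp ⟨Matrix.toLin' B (Pi.single j 1), ⟨_, rfl⟩⟩
    refine ⟨c, ?_⟩
    rw [hc]
    ext i
    simp
  choose c hc using hcol
  refine ⟨p (Pi.single 0 1), fun j => c j 0, p (Pi.single 1 1), fun j => c j 1, ?_⟩
  ext i j
  have h1 : c j = c j 0 • Pi.single 0 1 + c j 1 • Pi.single 1 1 := by
    ext k; fin_cases k <;> simp
  have h2 := congrFun (hc j) i
  rw [h1] at h2
  simp only [map_add, map_smul, Submodule.coe_add, Submodule.coe_smul, Pi.add_apply,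
    Pi.smul_apply, smul_eq_mul] at h2
  simp only [Matrix.add_apply, Matrix.vecMulVec_apply]
  rw [← h2]; ring

/-- Rank drop along the divisors of an annihilating polynomial. -/
theorem rank_drop {F V : Type*} [Field F] [AddCommGroup V] [Module F V]
    [FiniteDimensional F V] (f : Module.End F V) (m : F[X]) (hm : aeval f m = 0)
    (hr : ∀ a q, m = (X - C a) * q → 3 ≤ Module.finrank F (LinearMap.range (aeval f q)))
    (s : Multiset F) (r : F[X]) (hs : m = (s.map fun a => X - C a).prod * r) :
    Module.finrank F (LinearMap.range (aeval f (s.map fun a => X - C a).prod)) + 3 * s.card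
      ≤ Module.finrank F V := by
  induction s using Multiset.induction_on generalizing r with
  | empty =>
    rw [Multiset.card_zero, mul_zero, add_zero]
    exact Submodule.finrank_le _
  | cons a s ih =>
    rw [Multiset.map_cons, Multiset.prod_cons] at hs ⊢
    set p := (s.map fun a => X - C a).prod with hp
    have ih' := ih ((X - C a) * r) (by rw [hs]; ring)
    have h3 := hr a (p * r) (by rw [hs]; ring)
    rw [Multiset.card_cons]
    let g := (aeval f (X - C a)).domRestrict (LinearMap.range (aeval f p))
    have hrn := LinearMap.finrank_range_add_finrank_ker g
    have hrange : LinearMap.range g = LinearMap.range (aeval f ((X - C a) * p)) := by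
      rw [LinearMap.range_domRestrict, map_mul, Module.End.mul_eq_comp, LinearMap.range_comp]
    rw [hrange] at hrn
    have hker : Module.finrank F (LinearMap.range (aeval f (p * r)))
        ≤ Module.finrank F (LinearMap.ker g) := by
      rw [(Submodule.equivMapOfInjective (LinearMap.range (aeval f p)).subtype
        Subtype.val_injective (LinearMap.ker g)).finrank_eq]
      apply Submodule.finrank_mono
      rintro _ ⟨x, rfl⟩
      have hx : aeval f (p * r) x ∈ LinearMap.range (aeval f p) := by
        rw [map_mul]; exact ⟨aeval f r x, rfl⟩
      refine ⟨⟨_, hx⟩, ?_, rfl⟩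
      change (aeval f (X - C a)) (aeval f (p * r) x) = 0
      rw [← Module.End.mul_apply, ← map_mul,
        show (X - C a) * (p * r) = m by rw [hs]; ring, hm]
      rfl
    omega

theorem exists_rank_le_two {F : Type*} [Field F] [IsAlgClosed F] {n : ℕ}
    (A : Matrix (Fin n) (Fin n) F) (h : n < 3 * (minpoly F A).natDegree) :
    ∃ q : F[X], q.natDegree + 1 = (minpoly F A).natDegree ∧ aeval A q ≠ 0 ∧
      Module.finrank F (LinearMap.range (Matrix.toLin' (aeval A q))) ≤ 2 := by
  have hAint : IsIntegral F A := Algebra.IsIntegral.isIntegral A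
  have hmon := minpoly.monic hAint
  have hkey : ∃ a q, minpoly F A = (X - C a) * q ∧
      Module.finrank F (LinearMap.range (Matrix.toLin' (aeval A q))) ≤ 2 := by
    by_contra! hc
    have hae : ∀ q : F[X], aeval (Matrix.toLin' A) q = Matrix.toLin' (aeval A q) := by
      intro q
      exact Polynomial.aeval_algHom_apply (Matrix.toLinAlgEquiv' (R := F) (n := Fin n)) A q
    have hspl := IsAlgClosed.splits (minpoly F A)
    have := rank_drop (Matrix.toLin' A) (minpoly F A) (by rw [hae, minpoly.aeval]; simp)
      (by intro a q hq; rw [hae]; exact hc a q hq) (minpoly F A).roots 1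
      (by rw [mul_one]; exact hspl.eq_prod_roots_of_monic hmon)
    rw [← hspl.natDegree_eq_card_roots] at this
    simp at this
    omega
  obtain ⟨a, q, hq, hrk⟩ := hkey
  have hq0 : q ≠ 0 := by
    rintro rfl
    exact hmon.ne_zero (by simpa using hq)
  have hdeg : q.natDegree + 1 = (minpoly F A).natDegree := by
    rw [hq, natDegree_mul (X_sub_C_ne_zero a) hq0, natDegree_X_sub_C, add_comm]
  refine ⟨q, hdeg, ?_, hrk⟩
  intro h0
  have := natDegree_le_of_dvd (minpoly.dvd F A h0) hq0
  omega

theorem length_le_of_minpoly_deg_between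
    (F : Type*) [Field F] [IsAlgClosed F] (n t : ℕ)
    (hn : 0 < n) (ht : 0 < t) (h1 : 2 * t ≤ n) (h2 : n + 1 ≤ 3 * t)
    (S : Finset (Matrix (Fin n) (Fin n) F))
    (hgen : IsGeneratingSystem F (S : Set (Matrix (Fin n) (Fin n) F)))
    (hm : S.sup (fun M => (minpoly F M).natDegree) = t) :
    2 * genLength F (S : Set (Matrix (Fin n) (Fin n) F)) ≤ 7 * n - 8 := by
  have hne : S.Nonempty := by
    rw [Finset.nonempty_iff_ne_empty]
    rintro rfl
    simp at hm
    omega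
  obtain ⟨A, hA, hAt⟩ := Finset.exists_mem_eq_sup S hne (fun M => (minpoly F M).natDegree)
  rw [hm] at hAt
  obtain ⟨q, hqd, hq0, hqr⟩ := exists_rank_le_two A (by omega)
  obtain ⟨u₁, v₁, u₂, v₂, hB⟩ := rank_two_decomp _ hqr
  have hBmem : aeval A q ∈ wordSpan F (S : Set (Matrix (Fin n) (Fin n) F)) (t - 1) := by
    have := aeval_mem_wordSpan (F := F) (S : Set (Matrix (Fin n) (Fin n) F)) hA q
    rwa [show q.natDegree = t - 1 by omega] at this
  set B := aeval A q with hBdef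
  have hdim : n ≤ Module.finrank F ↥(wordSpan F (S : Set (Matrix (Fin n) (Fin n) F)) (n - 1)
      * Submodule.span F {B}) := by
    rcases left_growth (S : Set (Matrix (Fin n) (Fin n) F)) hgen B hq0 (n - 1) with h | h
    · omega
    · rw [h]
      obtain ⟨i, j, hij⟩ : ∃ i j, B i j ≠ 0 := by
        by_contra! h
        exact hq0 (by ext i j; simpa using h i j)
      let f : (Fin n → F) →ₗ[F] Matrix (Fin n) (Fin n) F :=
        { toFun := fun x => vecMulVec x (B i)
          map_add' := fun x y => Matrix.add_vecMulVec x y _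
          map_smul' := fun c x => Matrix.smul_vecMulVec c x _ }
      have hf : Function.Injective f := by
        intro x y hxy
        ext k
        have := congrFun (congrFun hxy k) j
        change x k * B i j = y k * B i j at this
        exact mul_right_cancel₀ hij this
      have hle : LinearMap.range f ≤
          (⊤ : Submodule F (Matrix (Fin n) (Fin n) F)) * Submodule.span F {B} := by
        rintro _ ⟨x, rfl⟩
        have : f x = vecMulVec x (Pi.single i 1) * B := by
          rw [Matrix.vecMulVec_mul, Matrix.single_one_vecMul]
          rfl
        rw [this]
        exact Submodule.mul_mem_mul trivial (Submodule.mem_span_singleton_self _)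
      have h3 := Submodule.finrank_mono hle
      rw [LinearMap.finrank_range_of_inj hf] at h3
      simpa using h3
  obtain ⟨u, v, huv0, huv⟩ := exists_rank_one hn _ hdim v₁ v₂ (by
    intro w hw
    rw [Submodule.mem_mul_span_singleton] at hw
    obtain ⟨x, -, rfl⟩ := hw
    refine ⟨x *ᵥ u₁, x *ᵥ u₂, ?_⟩
    rw [hB, Matrix.mul_add, Matrix.mul_vecMulVec, Matrix.mul_vecMulVec])
  have hmem : vecMulVec u v ∈ wordSpan F (S : Set (Matrix (Fin n) (Fin n) F))
      ((n - 1) + (t - 1)) := by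
    rw [← wordSpan_mul]
    have hsp : Submodule.span F {B} ≤ wordSpan F (S : Set (Matrix (Fin n) (Fin n) F)) (t - 1) := by
      rw [Submodule.span_le]; simpa using hBmem
    have hle := mul_le_mul' (le_refl (wordSpan F (S : Set (Matrix (Fin n) (Fin n) F)) (n - 1))) hsp
    exact hle huv
  have htop := wordSpan_top_of_rank_one hn _ hgen u v _ huv0 hmem
  have : genLength F (S : Set (Matrix (Fin n) (Fin n) F))
      ≤ (n - 1) + ((n - 1) + (t - 1)) + (n - 1) := Nat.sInf_le htop
  omega
end

section
/- Let F be a field, let S be a finite generating system of the full matrix algebra M_n(F), and let k ≥ 2. If the subspace L_k(S) contains a matrix of rank one, then ℓ(S) ≤ 2n + k − 4. -/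
open Polynomial Matrix

namespace LenAux

set_option linter.unusedSectionVars false

section chain
variable {F E : Type*} [Field F] [AddCommGroup E] [Module F E] [FiniteDimensional F E]

lemma chain_finrank (C : ℕ → Submodule F E) (hanti : ∀ j, C (j+1) ≤ C j)
    (hst : ∀ j, C (j+1) = C j → C (j+2) = C (j+1))
    (hbot : ∀ y, (∀ j, y ∈ C j) → y = 0) (j : ℕ) :
    Module.finrank F (C j) ≤ Module.finrank F E - j := by
  induction j with
  | zero => simpa using Submodule.finrank_le (C 0)
  | succ j ih =>
    by_cases h : C (j+1) = C j
    · have h1 : ∀ m, C (j+m+1) = C (j+m) := by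
        intro m
        induction m with
        | zero => exact h
        | succ m ihm => exact hst _ ihm
      have h2 : ∀ m, C (j+m) = C j := by
        intro m
        induction m with
        | zero => rfl
        | succ m ihm => rw [← ihm]; exact h1 m
      have hA : Antitone C := antitone_nat_of_succ_le hanti
      have h3 : C j = ⊥ := by
        rw [Submodule.eq_bot_iff]
        intro y hy
        apply hbot
        intro i
        have : y ∈ C (j + i) := by rw [h2]; exact hy
        exact hA (by omega) this
      rw [h, h3]; simp
    · have hlt : C (j+1) < C j := lt_of_le_of_ne (hanti j) h
      have := Submodule.finrank_lt_finrank_of_lt hlt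
      omega

lemma span_of_finrank_le_two (P : Submodule F E) (hP : Module.finrank F P ≤ 2)
    {x y : E} (hx : x ∈ P) (hy : y ∈ P) (hx0 : x ≠ 0) (hxy : ∀ c : F, y ≠ c • x)
    {w : E} (hw : w ∈ P) : ∃ a b : F, w = a • x + b • y := by
  have hli : LinearIndependent F ![x, y] := by
    rw [LinearIndependent.pair_iff' hx0]
    intro c hc
    exact hxy c hc.symm
  have hle : Submodule.span F (Set.range ![x, y]) ≤ P := by
    rw [Submodule.span_le]
    rintro _ ⟨i, rfl⟩
    fin_cases i
    · exact hx
    · exact hy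
  have hfr := finrank_span_eq_card hli
  have heq := Submodule.eq_of_le_of_finrank_le hle (by rw [hfr]; simpa using hP)
  rw [← heq] at hw
  simp only [Matrix.range_cons, Matrix.range_empty, Set.union_empty,
    Set.singleton_union] at hw
  obtain ⟨a, b, h⟩ := Submodule.mem_span_pair.1 hw
  exact ⟨a, b, h.symm⟩

lemma smul_of_finrank_le_one (P : Submodule F E) (hP : Module.finrank F P ≤ 1)
    {x : E} (hx : x ∈ P) (hx0 : x ≠ 0) {w : E} (hw : w ∈ P) : ∃ a : F, w = a • x := by
  by_contra! h
  have hli : LinearIndependent F ![x, w] := by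
    rw [LinearIndependent.pair_iff' hx0]
    intro c hc
    exact h c hc.symm
  have hle : Submodule.span F (Set.range ![x, w]) ≤ P := by
    rw [Submodule.span_le]
    rintro _ ⟨i, rfl⟩
    fin_cases i
    · exact hx
    · exact hw
  have hfr := finrank_span_eq_card hli
  have := Submodule.finrank_mono hle
  rw [hfr] at this
  simp at this
  omega

end chain

variable {F : Type*} [Field F] {n : ℕ}

def Wd (S : Set (Matrix (Fin n) (Fin n) F)) (l : List (Matrix (Fin n) (Fin n) F)) : Prop :=
  ∀ a ∈ l, a ∈ S

def Ys (S : Set (Matrix (Fin n) (Fin n) F)) (v : Fin n → F) (j : ℕ) :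
    Submodule F (Fin n → F) where
  carrier := {y | ∀ l, l.length < j → Wd S l → v ⬝ᵥ (l.prod *ᵥ y) = 0}
  zero_mem' := by intro l _ _; simp
  add_mem' := by
    intro a b ha hb l h1 h2
    rw [Matrix.mulVec_add, dotProduct_add, ha l h1 h2, hb l h1 h2, add_zero]
  smul_mem' := by
    intro c a ha l h1 h2
    rw [Matrix.mulVec_smul, dotProduct_smul, ha l h1 h2, smul_zero]

def Ts (S : Set (Matrix (Fin n) (Fin n) F)) (u : Fin n → F) (j : ℕ) :
    Submodule F (Fin n → F) where
  carrier := {t | ∀ l, l.length < j → Wd S l → t ⬝ᵥ (l.prod *ᵥ u) = 0}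
  zero_mem' := by intro l _ _; simp
  add_mem' := by
    intro a b ha hb l h1 h2
    rw [add_dotProduct, ha l h1 h2, hb l h1 h2, add_zero]
  smul_mem' := by
    intro c a ha l h1 h2
    rw [smul_dotProduct, ha l h1 h2, smul_zero]

lemma gen_ext {S : Set (Matrix (Fin n) (Fin n) F)} (hgen : IsGeneratingSystem F S)
    (f : Matrix (Fin n) (Fin n) F →ₗ[F] F) (hf : ∀ l, Wd S l → f l.prod = 0)
    (X : Matrix (Fin n) (Fin n) F) : f X = 0 := by
  obtain ⟨i, hi⟩ := hgen X
  have : wordSpan F S i ≤ LinearMap.ker f := by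
    unfold wordSpan
    rw [Submodule.span_le]
    rintro _ ⟨l, _, hl, rfl⟩
    exact hf l hl
  exact this hi

def dotL (t y : Fin n → F) : Matrix (Fin n) (Fin n) F →ₗ[F] F where
  toFun X := t ⬝ᵥ (X *ᵥ y)
  map_add' := by intro a b; rw [Matrix.add_mulVec, dotProduct_add]
  map_smul' := by intro a b; rw [Matrix.smul_mulVec, dotProduct_smul]; rfl

lemma pair_zero {S : Set (Matrix (Fin n) (Fin n) F)} (hgen : IsGeneratingSystem F S)
    {t y : Fin n → F} (h : ∀ l, Wd S l → t ⬝ᵥ (l.prod *ᵥ y) = 0) : t = 0 ∨ y = 0 := by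
  by_contra! hne
  obtain ⟨i, hi⟩ := Function.ne_iff.1 hne.1
  obtain ⟨j, hj⟩ := Function.ne_iff.1 hne.2
  have := gen_ext hgen (dotL t y) h (Matrix.single i j 1)
  simp only [dotL, LinearMap.coe_mk, AddHom.coe_mk, Matrix.single_mulVec,
    one_mul] at this
  have e : Function.update (0 : Fin n → F) i (y j) = Pi.single i (y j) := rfl
  rw [e, dotProduct_single] at this
  exact (mul_ne_zero hi hj) this

lemma Wd_snoc {S : Set (Matrix (Fin n) (Fin n) F)} {l : List (Matrix (Fin n) (Fin n) F)}
    {s : Matrix (Fin n) (Fin n) F} : Wd S (l ++ [s]) ↔ Wd S l ∧ s ∈ S := by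
  simp [Wd, or_imp, forall_and]

lemma Wd_cons {S : Set (Matrix (Fin n) (Fin n) F)} {l : List (Matrix (Fin n) (Fin n) F)}
    {s : Matrix (Fin n) (Fin n) F} : Wd S (s :: l) ↔ s ∈ S ∧ Wd S l := by
  simp [Wd]

lemma Wd_app {S : Set (Matrix (Fin n) (Fin n) F)} {l l' : List (Matrix (Fin n) (Fin n) F)} :
    Wd S (l ++ l') ↔ Wd S l ∧ Wd S l' := by
  simp [Wd, or_imp, forall_and]

lemma Wd_nil {S : Set (Matrix (Fin n) (Fin n) F)} : Wd S [] := by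
  simp [Wd]

lemma Ys_step {S : Set (Matrix (Fin n) (Fin n) F)} {v : Fin n → F} {j : ℕ} {y : Fin n → F}
    (hy : y ∈ Ys S v (j+1)) {s} (hs : s ∈ S) : s *ᵥ y ∈ Ys S v j := by
  intro l hl hw
  have := hy (l ++ [s]) (by simpa using hl) (Wd_snoc.2 ⟨hw, hs⟩)
  simpa [Matrix.mulVec_mulVec] using this

lemma Ts_step {S : Set (Matrix (Fin n) (Fin n) F)} {u : Fin n → F} {j : ℕ} {t : Fin n → F}
    (ht : t ∈ Ts S u (j+1)) {s} (hs : s ∈ S) : t ᵥ* s ∈ Ts S u j := by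
  intro l hl hw
  have := ht (s :: l) (by simpa using hl) (Wd_cons.2 ⟨hs, hw⟩)
  rw [List.prod_cons, ← Matrix.mulVec_mulVec, Matrix.dotProduct_mulVec] at this
  exact this

lemma Ys_finrank {S : Set (Matrix (Fin n) (Fin n) F)} (hgen : IsGeneratingSystem F S)
    {v : Fin n → F} (hv : v ≠ 0) (j : ℕ) : Module.finrank F (Ys S v j) ≤ n - j := by
  have := chain_finrank (Ys S v) (fun j y hy l hl hw => hy l (by omega) hw) ?_ ?_ j
  · simpa using this
  · intro j h
    apply le_antisymm
    · exact fun y hy l hl hw => hy l (by omega) hw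
    · intro y hy l hl hw
      rcases List.eq_nil_or_concat l with rfl | ⟨l', s, rfl⟩
      · exact hy [] (by simp) Wd_nil
      · rw [List.concat_eq_append] at hl hw ⊢
        rw [Wd_snoc] at hw
        have h1 := Ys_step hy hw.2
        rw [← h] at h1
        have h2 := h1 l' (by simpa using hl) hw.1
        simpa [Matrix.mulVec_mulVec] using h2
  · intro y hy
    exact (pair_zero hgen (t := v) (y := y)
      (fun l hl => hy (l.length+1) l (by omega) hl)).resolve_left hv

lemma Ts_finrank {S : Set (Matrix (Fin n) (Fin n) F)} (hgen : IsGeneratingSystem F S)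
    {u : Fin n → F} (hu : u ≠ 0) (j : ℕ) : Module.finrank F (Ts S u j) ≤ n - j := by
  have := chain_finrank (Ts S u) (fun j y hy l hl hw => hy l (by omega) hw) ?_ ?_ j
  · simpa using this
  · intro j h
    apply le_antisymm
    · exact fun y hy l hl hw => hy l (by omega) hw
    · intro t ht l hl hw
      rcases l with _ | ⟨s, l'⟩
      · exact ht [] (by simp) Wd_nil
      · rw [Wd_cons] at hw
        have h1 := Ts_step ht hw.1
        rw [← h] at h1
        have h2 := h1 l' (by simpa using hl) hw.2
        rw [List.prod_cons, ← Matrix.mulVec_mulVec, Matrix.dotProduct_mulVec]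
        exact h2
  · intro t ht
    exact (pair_zero hgen (t := t) (y := u)
      (fun l hl => ht (l.length+1) l (by omega) hl)).resolve_right hu

lemma Ys_zero {S : Set (Matrix (Fin n) (Fin n) F)} (hgen : IsGeneratingSystem F S)
    {v : Fin n → F} (hv : v ≠ 0) {y} (hy : y ∈ Ys S v n) : y = 0 := by
  have h := Ys_finrank hgen hv n
  rw [Nat.sub_self, Nat.le_zero, Submodule.finrank_eq_zero] at h
  rw [h] at hy
  simpa using hy

lemma Ts_zero {S : Set (Matrix (Fin n) (Fin n) F)} (hgen : IsGeneratingSystem F S)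
    {u : Fin n → F} (hu : u ≠ 0) {t} (ht : t ∈ Ts S u n) : t = 0 := by
  have h := Ts_finrank hgen hu n
  rw [Nat.sub_self, Nat.le_zero, Submodule.finrank_eq_zero] at h
  rw [h] at ht
  simpa using ht

/-- the trace functional attached to `B` -/
lemma exists_traceRep (f : Matrix (Fin n) (Fin n) F →ₗ[F] F) :
    ∃ B : Matrix (Fin n) (Fin n) F, ∀ X, f X = (B * X).trace := by
  refine ⟨fun i j => f (Matrix.single j i 1), fun X => ?_⟩
  conv_lhs => rw [Matrix.matrix_eq_sum_single X]
  simp only [map_sum, Matrix.trace, Matrix.diag]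
  rw [Finset.sum_comm]
  refine Finset.sum_congr rfl fun i _ => Finset.sum_congr rfl fun j _ => ?_
  have : Matrix.single j i (X j i) = X j i • Matrix.single j i (1 : F) := by
    simp [Matrix.smul_single]
  rw [this, map_smul, smul_eq_mul, mul_comm]

lemma rank_one_rep (M : Matrix (Fin n) (Fin n) F) (h : M.rank = 1) :
    ∃ u v : Fin n → F, u ≠ 0 ∧ v ≠ 0 ∧ M = Matrix.vecMulVec u v := by
  have hM : M ≠ 0 := by
    rintro rfl
    simp at h
  rw [Matrix.rank] at h
  obtain ⟨u, hu0, hu⟩ := finrank_eq_one_iff'.1 h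
  have : ∀ j, ∃ c : F, M *ᵥ (Pi.single j 1) = c • (u : Fin n → F) := by
    intro j
    obtain ⟨c, hc⟩ := hu ⟨M *ᵥ (Pi.single j 1), ⟨Pi.single j 1, rfl⟩⟩
    exact ⟨c, by simpa using (congrArg Subtype.val hc).symm⟩
  choose v hv using this
  have hMuv : M = Matrix.vecMulVec (u : Fin n → F) v := by
    ext i j
    have := congrFun (hv j) i
    simp at this
    rw [Matrix.vecMulVec_apply, this, mul_comm]
  refine ⟨u, v, by simpa using hu0, ?_, hMuv⟩
  rintro rfl
  apply hM
  rw [hMuv]; ext; simp [Matrix.vecMulVec_apply]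

lemma trace_vec (u v : Fin n → F) (X : Matrix (Fin n) (Fin n) F) :
    (Matrix.vecMulVec u v * X).trace = v ⬝ᵥ (X *ᵥ u) := by
  rw [Matrix.vecMulVec_mul, Matrix.trace_vecMulVec, Matrix.dotProduct_mulVec, dotProduct_comm]

/-- `B` cannot have rank one. -/
lemma not_rank_one {S : Set (Matrix (Fin n) (Fin n) F)} (hgen : IsGeneratingSystem F S)
    {N : ℕ} (hN : n ≤ N + 1) {B : Matrix (Fin n) (Fin n) F} (hB0 : B ≠ 0)
    (hB : ∀ l, Wd S l → l.length ≤ N → (B * l.prod).trace = 0)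
    (y t : Fin n → F) (h : B = Matrix.vecMulVec y t) : False := by
  have ht : t ≠ 0 := by
    rintro rfl
    exact hB0 (by rw [h]; simp)
  have hy : y ∈ Ys S t n := by
    intro l hl hw
    rw [← trace_vec, ← h]
    exact hB l hw (by omega)
  have hy0 := Ys_zero hgen ht hy
  subst hy0
  exact hB0 (by rw [h]; ext; simp [Matrix.vecMulVec_apply])

/-- a generator moving a nonzero vector off its line (column version) -/
lemma exists_move {S : Set (Matrix (Fin n) (Fin n) F)} (hgen : IsGeneratingSystem F S)
    {y : Fin n → F} (hy : y ≠ 0) (hn : 2 ≤ n) : ∃ a ∈ S, ∀ c : F, a *ᵥ y ≠ c • y := by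
  by_contra! h
  have key : ∀ l, Wd S l → ∃ c : F, l.prod *ᵥ y = c • y := by
    intro l
    induction l with
    | nil => intro _; exact ⟨1, by simp⟩
    | cons s l ih =>
      intro hw
      rw [Wd_cons] at hw
      obtain ⟨c, hc⟩ := ih hw.2
      obtain ⟨d, hd⟩ := h s hw.1
      refine ⟨c * d, ?_⟩
      rw [List.prod_cons, ← Matrix.mulVec_mulVec, hc, Matrix.mulVec_smul, hd, smul_smul]
  -- a nonzero functional vanishing at `y`
  have hlt : Submodule.span F {y} < ⊤ := by
    rw [lt_top_iff_ne_top]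
    intro ht
    have h1 := finrank_span_singleton (K := F) hy
    rw [ht, finrank_top] at h1
    simp at h1
    omega
  obtain ⟨f, hf0, hf⟩ := Submodule.exists_le_ker_of_lt_top _ hlt
  have hfy : f y = 0 := hf (Submodule.mem_span_singleton_self y)
  let t : Fin n → F := fun i => f (Pi.single i 1)
  have hft : ∀ w, t ⬝ᵥ w = f w := by
    intro w
    rw [LinearMap.pi_apply_eq_sum_univ f w]
    simp only [dotProduct, t, smul_eq_mul]
    refine Finset.sum_congr rfl fun i _ => ?_
    rw [mul_comm]
    congr 2
    ext j
    simp [Pi.single_apply, eq_comm]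
  rcases pair_zero hgen (t := t) (y := y) (fun l hl => by
    obtain ⟨c, hc⟩ := key l hl
    rw [hft, hc, map_smul, hfy, smul_zero]) with h0 | h0
  · apply hf0
    ext1 w
    ext
    simp only [LinearMap.coe_comp, LinearMap.coe_single, Function.comp]
    have := hft (Pi.single w 1)
    rw [h0] at this
    simpa using this.symm
  · exact hy h0

/-- a generator moving a nonzero vector off its line (row version) -/
lemma exists_move' {S : Set (Matrix (Fin n) (Fin n) F)} (hgen : IsGeneratingSystem F S)
    {q : Fin n → F} (hq : q ≠ 0) (hn : 2 ≤ n) : ∃ b ∈ S, ∀ c : F, q ᵥ* b ≠ c • q := by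
  by_contra! h
  have key : ∀ l, Wd S l → ∃ c : F, q ᵥ* l.prod = c • q := by
    intro l
    induction l with
    | nil => intro _; exact ⟨1, by simp⟩
    | cons s l ih =>
      intro hw
      rw [Wd_cons] at hw
      obtain ⟨c, hc⟩ := ih hw.2
      obtain ⟨d, hd⟩ := h s hw.1
      refine ⟨d * c, ?_⟩
      rw [List.prod_cons, ← Matrix.vecMul_vecMul, hd, Matrix.smul_vecMul, hc, smul_smul]
  have hker : ∃ y : Fin n → F, y ≠ 0 ∧ q ⬝ᵥ y = 0 := by
    by_contra! hk
    let f : (Fin n → F) →ₗ[F] F := 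
      { toFun := fun y => q ⬝ᵥ y
        map_add' := fun a b => dotProduct_add _ _ _
        map_smul' := fun a b => dotProduct_smul _ _ _ }
    have hinj : Function.Injective f := by
      rw [← LinearMap.ker_eq_bot, Submodule.eq_bot_iff]
      intro y hy
      by_contra hy0
      exact hk y hy0 hy
    have := LinearMap.finrank_le_finrank_of_injective hinj
    simp at this
    omega
  obtain ⟨y, hy0, hqy⟩ := hker
  rcases pair_zero hgen (t := q) (y := y) (fun l hl => by
    obtain ⟨c, hc⟩ := key l hl
    rw [Matrix.dotProduct_mulVec, hc, smul_dotProduct, hqy, smul_zero]) with h0 | h0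
  · exact hq h0
  · exact hy0 h0

lemma core {m : ℕ} {S : Set (Matrix (Fin (m+2)) (Fin (m+2)) F)}
    (hgen : IsGeneratingSystem F S)
    {u v : Fin (m+2) → F} (hu : u ≠ 0) (hv : v ≠ 0) {N : ℕ} (hN : 2 * m + 2 ≤ N)
    {B : Matrix (Fin (m+2)) (Fin (m+2)) F} (hB0 : B ≠ 0)
    (hB : ∀ l, Wd S l → l.length ≤ N → (B * l.prod).trace = 0)
    (hBM : ∀ l l', Wd S l → Wd S l' → l.length + l'.length ≤ 2 * m →
      v ⬝ᵥ (l.prod *ᵥ (B *ᵥ (l'.prod *ᵥ u))) = 0) : False := by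
  have nr1 := not_rank_one hgen (by omega) hB0 hB
  have hT1 : Module.finrank F (Ts S u (m+1)) ≤ 1 := by
    have := Ts_finrank hgen hu (m+1); omega
  have hT2 : Module.finrank F (Ts S u m) ≤ 2 := by
    have := Ts_finrank hgen hu m; omega
  have hY1 : Module.finrank F (Ys S v (m+1)) ≤ 1 := by
    have := Ys_finrank hgen hv (m+1); omega
  have hY2 : Module.finrank F (Ys S v m) ≤ 2 := by
    have := Ys_finrank hgen hv m; omega
  -- the range of `B`
  have hBrange : ∀ e, B *ᵥ e ∈ Ys S v m := by
    intro e l hl hw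
    have : (v ᵥ* l.prod) ᵥ* B ∈ Ts S u (m+2) := by
      intro l' hl' hw'
      rw [← Matrix.dotProduct_mulVec, ← Matrix.dotProduct_mulVec]
      exact hBM l l' hw hw' (by omega)
    have h0 := Ts_zero hgen hu this
    rw [Matrix.dotProduct_mulVec, Matrix.dotProduct_mulVec, h0, zero_dotProduct]
  have hBV1 : ∀ l', Wd S l' → l'.length < m+1 → B *ᵥ (l'.prod *ᵥ u) ∈ Ys S v (m+1) := by
    intro l' hw' hl' l hl hw
    exact hBM l l' hw hw' (by omega)
  have hBV2 : ∀ l', Wd S l' → l'.length < m → B *ᵥ (l'.prod *ᵥ u) = 0 := by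
    intro l' hw' hl'
    apply Ys_zero hgen hv
    intro l hl hw
    exact hBM l l' hw hw' (by omega)
  -- the vector `y`
  have hy : ∃ y, y ≠ 0 ∧ y ∈ Ys S v (m+1) := by
    by_contra! hno
    have hrow : ∀ i, B i ∈ Ts S u (m+1) := by
      intro i l hl hw
      by_contra hne
      refine hno (B *ᵥ (l.prod *ᵥ u)) ?_ (hBV1 l hw hl)
      intro h0
      exact hne (congrFun h0 i)
    obtain ⟨i, hi⟩ : ∃ i, B i ≠ 0 := by
      by_contra! h
      exact hB0 (by ext i j; exact congrFun (h i) j)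
    have hc : ∀ k, ∃ c : F, B k = c • B i := fun k =>
      smul_of_finrank_le_one _ hT1 (hrow i) hi (hrow k)
    choose c hc using hc
    refine nr1 c (B i) ?_
    ext k j
    rw [Matrix.vecMulVec_apply, congrFun (hc k) j]
    rfl
  obtain ⟨y, hy0, hy⟩ := hy
  obtain ⟨a, ha, hay⟩ := exists_move hgen hy0 (by omega)
  have hyY : y ∈ Ys S v m := fun l hl hw => hy l (by omega) hw
  have hzY : a *ᵥ y ∈ Ys S v m := Ys_step hy ha
  have hcol : ∀ j, ∃ p q : F, B *ᵥ (Pi.single j 1) = p • y + q • (a *ᵥ y) := fun j =>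
    span_of_finrank_le_two _ hY2 hyY hzY hy0 hay (hBrange _)
  choose p q hpq using hcol
  have hBpq : B = Matrix.vecMulVec y p + Matrix.vecMulVec (a *ᵥ y) q := by
    ext i j
    have := congrFun (hpq j) i
    simp at this
    rw [this, Matrix.add_apply, Matrix.vecMulVec_apply, Matrix.vecMulVec_apply]
    ring
  have hBe : ∀ e, B *ᵥ e = (p ⬝ᵥ e) • y + (q ⬝ᵥ e) • (a *ᵥ y) := by
    intro e
    rw [hBpq, Matrix.add_mulVec, Matrix.vecMulVec_mulVec, Matrix.vecMulVec_mulVec]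
    ext i
    simp [mul_comm]
  have hindep : ∀ c d : F, c • y + d • (a *ᵥ y) = 0 → c = 0 ∧ d = 0 := by
    intro c d h
    have hd : d = 0 := by
      by_contra hd
      apply hay (-(d⁻¹ * c))
      have h2 : d • (a *ᵥ y) = -(c • y) := by
        exact eq_neg_of_add_eq_zero_right h
      rw [neg_smul, mul_smul, ← smul_neg, ← h2, smul_smul, inv_mul_cancel₀ hd, one_smul]
    subst hd
    simp [hy0] at h
    exact ⟨h, rfl⟩
  have hqT : q ∈ Ts S u (m+1) := by
    intro l hl hw
    obtain ⟨c, hc⟩ := smul_of_finrank_le_one _ hY1 hy hy0 (hBV1 l hw hl)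
    rw [hBe] at hc
    refine (hindep (p ⬝ᵥ (l.prod *ᵥ u) - c) _ ?_).2
    rw [sub_smul, ← hc]
    abel
  have hpT : p ∈ Ts S u m := by
    intro l hl hw
    have h := hBV2 l hw hl
    rw [hBe] at h
    exact (hindep _ _ h).1
  have hq0 : q ≠ 0 := by
    rintro rfl
    exact nr1 y p (by rw [hBpq]; simp)
  obtain ⟨b, hb, hqb⟩ := exists_move' hgen hq0 (by omega)
  have hqT' : q ∈ Ts S u m := fun l hl hw => hqT l (by omega) hw
  have hsp : ∀ w ∈ Ts S u m, ∃ c d : F, w = c • q + d • (q ᵥ* b) := fun w hw =>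
    span_of_finrank_le_two _ hT2 hqT' (Ts_step hqT hb) hq0 hqb hw
  obtain ⟨c₁, c₂, hp⟩ := hsp p hpT
  have hc₂ : c₂ ≠ 0 := by
    rintro rfl
    refine nr1 (c₁ • y + a *ᵥ y) q ?_
    rw [hBpq, hp]
    ext i j
    simp [Matrix.vecMulVec_apply]
    ring
  -- the trace form
  have htr : ∀ Z, (B * Z).trace = c₁ * (q ⬝ᵥ (Z *ᵥ y)) + c₂ * (q ⬝ᵥ (b *ᵥ (Z *ᵥ y)))
      + q ⬝ᵥ (Z *ᵥ (a *ᵥ y)) := by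
    intro Z
    rw [hBpq, add_mul, Matrix.trace_add, trace_vec, trace_vec, hp, add_dotProduct,
      smul_dotProduct, smul_dotProduct, ← Matrix.dotProduct_mulVec, smul_eq_mul, smul_eq_mul]
  -- every generator lies in the span of `1, b`
  have hS : ∀ s ∈ S, ∃ α β : F, s = α • (1 : Matrix (Fin (m+2)) (Fin (m+2)) F) + β • b := by
    intro s hs
    obtain ⟨α, β, hαβ⟩ := hsp _ (Ts_step hqT hs)
    refine ⟨α, β, ?_⟩
    set κ := s - α • (1 : Matrix (Fin (m+2)) (Fin (m+2)) F) - β • b with hκ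
    have hqκ : q ᵥ* κ = 0 := by
      rw [hκ, Matrix.vecMul_sub, Matrix.vecMul_sub, Matrix.vecMul_smul, Matrix.vecMul_smul,
        Matrix.vecMul_one, hαβ]
      abel
    have htrκ : ∀ X Y, Wd S X → Wd S Y → X.length + 1 + Y.length ≤ N →
        (B * (X.prod * κ * Y.prod)).trace = 0 := by
      intro X Y hX hY hl
      have e1 := hB (X ++ s :: Y) (Wd_app.2 ⟨hX, Wd_cons.2 ⟨hs, hY⟩⟩) (by simp; omega)
      have e2 := hB (X ++ b :: Y) (Wd_app.2 ⟨hX, Wd_cons.2 ⟨hb, hY⟩⟩) (by simp; omega)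
      have e3 := hB (X ++ Y) (Wd_app.2 ⟨hX, hY⟩) (by simp; omega)
      have : B * (X.prod * κ * Y.prod) = B * (X ++ s :: Y).prod - α • (B * (X ++ Y).prod)
          - β • (B * (X ++ b :: Y).prod) := by
        simp only [hκ, List.prod_append, List.prod_cons, mul_sub, sub_mul, mul_smul_comm,
          smul_mul_assoc, mul_one, mul_assoc]
      rw [this, Matrix.trace_sub, Matrix.trace_sub, Matrix.trace_smul, Matrix.trace_smul,
        e1, e2, e3]
      simp
    have main : ∀ X, Wd S X → ∀ Y, Wd S Y → X.length + Y.length ≤ 2 * m + 2 →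
        q ⬝ᵥ ((X.prod * κ * Y.prod) *ᵥ y) = 0 := by
      intro X
      induction X with
      | nil =>
        intro _ Y _ _
        rw [List.prod_nil, one_mul, ← Matrix.mulVec_mulVec, Matrix.dotProduct_mulVec, hqκ,
          zero_dotProduct]
      | cons r X ih =>
        intro hX Y hY hl
        rw [Wd_cons] at hX
        rw [List.length_cons] at hl
        obtain ⟨α', β', hr⟩ := hsp _ (Ts_step hqT hX.1)
        have i1 := ih hX.2 Y hY (by omega)
        have i2 := ih hX.2 (Y ++ [a]) (Wd_snoc.2 ⟨hY, ha⟩) (by simp; omega)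
        have i3 := htrκ X Y hX.2 hY (by omega)
        rw [htr, i1] at i3
        have i2' : q ⬝ᵥ ((X.prod * κ * Y.prod) *ᵥ (a *ᵥ y)) = 0 := by
          rw [List.prod_append, List.prod_singleton, ← mul_assoc, ← Matrix.mulVec_mulVec] at i2
          exact i2
        rw [i2', mul_zero, zero_add, add_zero] at i3
        have i4 := (mul_eq_zero.1 i3).resolve_left hc₂
        rw [List.prod_cons, mul_assoc, mul_assoc, ← mul_assoc X.prod, ← Matrix.mulVec_mulVec,
          Matrix.dotProduct_mulVec, hr, add_dotProduct, smul_dotProduct, smul_dotProduct,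
          ← Matrix.dotProduct_mulVec, i1, i4]
        simp
    have hrow : ∀ X, Wd S X → X.length < m + 2 → q ᵥ* (X.prod * κ) = 0 := by
      intro X hX hl
      apply Ts_zero hgen hy0
      intro Y hYl hY
      have := main X hX Y hY (by omega)
      rw [← Matrix.mulVec_mulVec, Matrix.dotProduct_mulVec] at this
      exact this
    have hcol : ∀ e, κ *ᵥ e = 0 := by
      intro e
      apply Ys_zero hgen hq0
      intro X hXl hX
      rw [Matrix.mulVec_mulVec, Matrix.dotProduct_mulVec, hrow X hX hXl, zero_dotProduct]
    have hκ0 : κ = 0 := by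
      ext i j
      have := congrFun (hcol (Pi.single j 1)) i
      simpa using this
    rw [hκ, sub_sub, sub_eq_zero] at hκ0
    exact hκ0
  -- hence everything commutes with `b`
  have hcommw : ∀ l, Wd S l → Commute b l.prod := by
    intro l
    induction l with
    | nil => intro _; simp
    | cons s l ih =>
      intro hw
      rw [Wd_cons] at hw
      rw [List.prod_cons]
      refine Commute.mul_right ?_ (ih hw.2)
      obtain ⟨α, β, h⟩ := hS s hw.1
      rw [h]
      exact Commute.add_right ((Commute.one_right b).smul_right α)
        ((Commute.refl b).smul_right β)
  have hcomm : ∀ X, Commute b X := by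
    intro X
    obtain ⟨i, hi⟩ := hgen X
    unfold wordSpan at hi
    induction hi using Submodule.span_induction with
    | mem x hx => obtain ⟨l, _, hl, rfl⟩ := hx; exact hcommw l hl
    | zero => exact Commute.zero_right b
    | add x y _ _ h1 h2 => exact h1.add_right h2
    | smul c x _ h1 => exact h1.smul_right c
  have hcen : b ∈ Set.range (Matrix.scalar (Fin (m+2)) (α := F)) := by
    rw [Matrix.mem_range_scalar_iff_commute_single']
    intro i j
    exact (hcomm _).symm
  obtain ⟨c, hc⟩ := hcen
  apply hqb c
  rw [← hc]
  ext i
  simp [Matrix.vecMul_diagonal, mul_comm]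

end LenAux

theorem length_le_of_rank_one_in_Lk
    (F : Type*) [Field F] (n : ℕ)
    (S : Finset (Matrix (Fin n) (Fin n) F))
    (hgen : IsGeneratingSystem F (S : Set (Matrix (Fin n) (Fin n) F)))
    (k : ℕ) (hk : 2 ≤ k)
    (M : Matrix (Fin n) (Fin n) F)
    (hM : M ∈ wordSpan F (S : Set (Matrix (Fin n) (Fin n) F)) k)
    (hrank : M.rank = 1) :
    genLength F (S : Set (Matrix (Fin n) (Fin n) F)) ≤ 2 * n + k - 4 := by
  obtain ⟨u, v, hu, hv, hMuv⟩ := LenAux.rank_one_rep M hrank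
  apply Nat.sInf_le
  show wordSpan F (S : Set (Matrix (Fin n) (Fin n) F)) (2 * n + k - 4) = ⊤
  by_contra hne
  obtain ⟨f, hf0, hf⟩ := Submodule.exists_le_ker_of_lt_top _ (lt_top_iff_ne_top.2 hne)
  obtain ⟨B, hBf⟩ := LenAux.exists_traceRep f
  have hB0 : B ≠ 0 := by
    rintro rfl
    apply hf0
    apply LinearMap.ext
    intro X
    simp [hBf]
  have hB : ∀ l, LenAux.Wd (S : Set (Matrix (Fin n) (Fin n) F)) l →
      l.length ≤ 2 * n + k - 4 → (B * l.prod).trace = 0 := by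
    intro l hw hl
    rw [← hBf]
    exact hf (Submodule.subset_span ⟨l, hl, hw, rfl⟩)
  rcases n with _ | _ | m
  · exact hu (Subsingleton.elim _ _)
  · -- size one
    have h := hB [] LenAux.Wd_nil (by simp)
    apply hB0
    ext i j
    have hi : i = 0 := by omega
    have hj : j = 0 := by omega
    subst hi hj
    simpa [Matrix.trace] using h
  · refine LenAux.core hgen hu hv (N := 2 * (m + 1 + 1) + k - 4) (by omega) hB0 hB ?_
    intro l l' hl hl' hlen
    have key : ∀ Z ∈ wordSpan F (S : Set (Matrix (Fin (m+1+1)) (Fin (m+1+1)) F)) k,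
        (B * (l'.prod * Z * l.prod)).trace = 0 := by
      intro Z hZ
      unfold wordSpan at hZ
      induction hZ using Submodule.span_induction with
      | mem x hx =>
        obtain ⟨w, hwl, hw, rfl⟩ := hx
        have := hB (l' ++ w ++ l) (LenAux.Wd_app.2 ⟨LenAux.Wd_app.2 ⟨hl', hw⟩, hl⟩)
          (by simp only [List.length_append]; omega)
        simpa only [List.prod_append] using this
      | zero => simp
      | add x y _ _ h1 h2 =>
        rw [mul_add, add_mul, mul_add, Matrix.trace_add, h1, h2, add_zero]
      | smul c x _ h1 =>
        rw [mul_smul_comm, smul_mul_assoc, mul_smul_comm, Matrix.trace_smul, h1, smul_zero]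
    have := key M hM
    rw [hMuv, Matrix.mul_vecMulVec, ← mul_assoc, Matrix.mul_vecMulVec,
      LenAux.trace_vec] at this
    exact this
end

section
/- Let F be a field, let n ≥ 2, and let S be a finite generating system of the full matrix algebra M_n(F). If S contains a matrix whose minimal polynomial has degree n − 1, then ℓ(S) ≤ 2n − 2. -/
open Polynomial Matrix

open Module

section abs
set_option linter.unusedSectionVars false
variable {K V : Type*} [Field K] [AddCommGroup V] [Module K V] [FiniteDimensional K V]

def PP (S : Set (End K V)) (k : ℕ) (X : End K V) : Prop :=
  ∀ l : List (End K V), l.length ≤ k → (∀ a ∈ l, a ∈ S) → LinearMap.trace K V (X * l.prod) = 0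

def Irr (S : Set (End K V)) : Prop :=
  ∀ U : Submodule K V, (∀ B ∈ S, ∀ u ∈ U, B u ∈ U) → U = ⊥ ∨ U = ⊤

theorem PP.mono {S : Set (End K V)} {k j : ℕ} {X : End K V} (h : PP S k X) (hj : j ≤ k) :
    PP S j X := fun l hl hS => h l (hl.trans hj) hS

theorem PP.add {S : Set (End K V)} {k : ℕ} {X Y : End K V} (h : PP S k X) (h' : PP S k Y) :
    PP S k (X + Y) := fun l hl hS => by
  rw [add_mul, map_add, h l hl hS, h' l hl hS, add_zero]

theorem PP.smul {S : Set (End K V)} {k : ℕ} {X : End K V} (h : PP S k X) (c : K) :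
    PP S k (c • X) := fun l hl hS => by
  rw [smul_mul_assoc, map_smul, h l hl hS, smul_zero]

theorem PP.zero {S : Set (End K V)} {k : ℕ} : PP S k 0 := fun l hl hS => by simp

theorem PP.mul {S : Set (End K V)} {k : ℕ} {X : End K V} (h : PP S (k + 1) X) {B : End K V}
    (hB : B ∈ S) : PP S k (B * X) := fun l hl hS => by
  rw [mul_assoc, LinearMap.trace_mul_comm, mul_assoc]
  have := h (l ++ [B]) (by simpa using hl) (by
    intro a ha
    rcases List.mem_append.1 ha with h1 | h1
    · exact hS a h1
    · rw [List.mem_singleton.1 h1]; exact hB)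
  simpa using this

theorem PP.pow {S : Set (End K V)} {B : End K V} (hB : B ∈ S) (i : ℕ) :
    ∀ {k : ℕ} {X : End K V}, PP S (k + i) X → PP S k (B ^ i * X) := by
  induction i with
  | zero => intro k X h; simpa using h
  | succ i ih =>
    intro k X h
    rw [pow_succ, mul_assoc]
    exact ih (PP.mul (by simpa [add_assoc] using h) hB)

theorem PP.aeval {S : Set (End K V)} {B : End K V} (hB : B ∈ S) {k d : ℕ} {X : End K V}
    (h : PP S (k + d) X) (f : K[X]) (hf : f.natDegree ≤ d) : PP S k (aeval B f * X) := by
  rw [aeval_eq_sum_range, Finset.sum_mul]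
  refine Finset.sum_induction _ (PP S k) (fun _ _ => PP.add) PP.zero ?_
  intro i hi
  rw [smul_mul_assoc]
  refine PP.smul (PP.pow hB i (h.mono ?_)) _
  have := Finset.mem_range.1 hi
  omega

/-- The cyclic space of `x` for words of length at most `k`. -/
def cyc (S : Set (End K V)) (x : V) (k : ℕ) : Submodule K V :=
  Submodule.span K {v | ∃ l : List (End K V), l.length ≤ k ∧ (∀ a ∈ l, a ∈ S) ∧ l.prod x = v}

theorem cyc_mono (S : Set (End K V)) (x : V) {j k : ℕ} (h : j ≤ k) : cyc S x j ≤ cyc S x k := by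
  apply Submodule.span_mono
  rintro v ⟨l, hl, hS, rfl⟩
  exact ⟨l, hl.trans h, hS, rfl⟩

theorem mem_cyc (S : Set (End K V)) (x : V) (k : ℕ) : x ∈ cyc S x k :=
  Submodule.subset_span ⟨[], by simp, by simp, by simp⟩

theorem cyc_step (S : Set (End K V)) (x : V) (k : ℕ) {B : End K V} (hB : B ∈ S) {u : V}
    (hu : u ∈ cyc S x k) : B u ∈ cyc S x (k + 1) := by
  have : cyc S x k ≤ (cyc S x (k + 1)).comap B := by
    apply Submodule.span_le.2
    rintro v ⟨l, hl, hS, rfl⟩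
    refine Submodule.subset_span ⟨B :: l, by simpa using hl, ?_, by simp⟩
    intro a ha
    rcases List.mem_cons.1 ha with rfl | h
    · exact hB
    · exact hS a h
  exact this hu

theorem finrank_cyc {S : Set (End K V)} (hI : Irr S) {x : V} (hx : x ≠ 0) (k : ℕ) :
    cyc S x k = ⊤ ∨ k + 1 ≤ finrank K (cyc S x k) := by
  induction k with
  | zero =>
    right
    rw [zero_add, Nat.one_le_iff_ne_zero, Ne, Submodule.finrank_eq_zero]
    intro h
    have := mem_cyc S x 0
    rw [h] at this
    exact hx (by simpa using this)
  | succ k ih =>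
    by_cases he : cyc S x k = cyc S x (k + 1)
    · left
      rw [← he]
      rcases hI (cyc S x k) (fun B hB u hu => he ▸ cyc_step S x k hB hu) with h | h
      · have := mem_cyc S x k
        rw [h] at this
        exact absurd (by simpa using this) hx
      · exact h
    · have hlt := lt_of_le_of_ne (cyc_mono S x (Nat.le_succ k)) he
      rcases ih with h | h
      · left
        rw [h] at hlt
        exact absurd hlt not_top_lt
      · right
        have := Submodule.finrank_lt_finrank_of_lt hlt
        simp only [Nat.succ_eq_add_one] at this
        omega

theorem cyc_top {S : Set (End K V)} (hI : Irr S) {x : V} (hx : x ≠ 0) {k : ℕ}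
    (hk : finrank K V ≤ k + 1) : cyc S x k = ⊤ := by
  rcases finrank_cyc hI hx k with h | h
  · exact h
  · exact Submodule.eq_top_of_finrank_eq (le_antisymm (Submodule.finrank_le _) (by omega))

theorem two_le_of_PP {S : Set (End K V)} (hI : Irr S) {k : ℕ} (hk : finrank K V ≤ k + 1)
    {X : End K V} (hP : PP S k X) (hX : X ≠ 0) : 2 ≤ finrank K (LinearMap.range X) := by
  by_contra hlt
  have h1 : finrank K (LinearMap.range X) ≤ 1 := by omega
  obtain ⟨x, hx⟩ := (finrank_le_one_iff).1 h1
  choose φ hφ using fun v : V => hx ⟨X v, v, rfl⟩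
  have hφ' : ∀ v, φ v • (x : V) = X v := fun v => congrArg Subtype.val (hφ v)
  have hx0 : (x : V) ≠ 0 := by
    intro h0
    apply hX
    ext v
    rw [← hφ', h0, smul_zero, LinearMap.zero_apply]
  let ψ : V →ₗ[K] K :=
    { toFun := φ
      map_add' := fun a b => by
        apply smul_left_injective K hx0
        simp only [add_smul, hφ', map_add]
      map_smul' := fun c a => by
        apply smul_left_injective K hx0
        simp only [smul_eq_mul, mul_smul, hφ', map_smul, RingHom.id_apply] }
  have hXψ : X = dualTensorHom K V V (ψ ⊗ₜ[K] (x : V)) := by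
    ext v
    rw [dualTensorHom_apply]
    exact (hφ' v).symm
  have hker : ∀ v, ψ v = 0 := by
    have : cyc S (x : V) k ≤ LinearMap.ker ψ := by
      apply Submodule.span_le.2
      rintro v ⟨l, hl, hS, rfl⟩
      have h2 := hP l hl hS
      rw [LinearMap.trace_mul_comm] at h2
      have h3 : l.prod * X = dualTensorHom K V V (ψ ⊗ₜ[K] (l.prod (x : V))) := by
        ext v
        rw [dualTensorHom_apply, Module.End.mul_apply, ← hφ', map_smul]
        rfl
      rw [h3, LinearMap.trace_eq_contract_apply, contractLeft_apply] at h2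
      exact h2
    intro v
    have h4 : v ∈ cyc S (x : V) k := by rw [cyc_top hI hx0 hk]; trivial
    exact this h4
  apply hX
  ext v
  rw [← hφ']
  have : φ v = 0 := hker v
  rw [this, zero_smul, LinearMap.zero_apply]

/-- rank of `f(a)` -/
noncomputable def rk (a : End K V) (f : K[X]) : ℕ := finrank K (LinearMap.range (aeval a f))

theorem rk_drop (a : End K V) (f : K[X]) (c : K) :
    rk a (f * (X - C c)) + finrank K
      (LinearMap.range (aeval a f) ⊓ LinearMap.ker (aeval a (X - C c)) : Submodule K V)
      = rk a f := by
  have := LinearMap.finrank_range_add_finrank_ker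
    ((aeval a (X - C c)).domRestrict (LinearMap.range (aeval a f)))
  unfold rk
  rw [← this]
  congr 1
  · rw [mul_comm, map_mul, Module.End.mul_eq_comp, LinearMap.range_comp,
      LinearMap.range_domRestrict]
  · rw [← Submodule.map_comap_subtype, Submodule.finrank_map_subtype_eq]
    rfl

theorem rk_strict (a : End K V) {m : K[X]} {N : ℕ} (hm : aeval a m = 0) (hm0 : m ≠ 0)
    (hN : m.natDegree = N)
    (hmin : ∀ p : K[X], p ≠ 0 → aeval a p = 0 → N ≤ p.natDegree)
    {f : K[X]} {c : K} (h : f * (X - C c) ∣ m) : rk a (f * (X - C c)) < rk a f := by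
  obtain ⟨g, hg⟩ := h
  by_contra hlt
  have h1 := rk_drop a f c
  have h2 : finrank K
      (LinearMap.range (aeval a f) ⊓ LinearMap.ker (aeval a (X - C c)) : Submodule K V) = 0 := by
    omega
  rw [Submodule.finrank_eq_zero] at h2
  have hfg0 : f * g ≠ 0 := by
    rintro h0
    apply hm0
    rw [hg, mul_right_comm, h0, zero_mul]
  have hz : aeval a (f * g) = 0 := by
    ext v
    have : aeval a (f * g) v ∈ (LinearMap.range (aeval a f) ⊓
        LinearMap.ker (aeval a (X - C c)) : Submodule K V) := by
      constructor
      · exact ⟨aeval a g v, by simp [map_mul]⟩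
      · change aeval a (X - C c) (aeval a (f * g) v) = 0
        rw [← Module.End.mul_apply, ← map_mul, show (X - C c) * (f * g) = m by rw [hg]; ring, hm]
        rfl
    rw [h2] at this
    simpa using this
  have h3 := hmin _ hfg0 hz
  have h4 : m.natDegree = (f * g).natDegree + 1 := by
    rw [hg, mul_right_comm, natDegree_mul hfg0 (X_sub_C_ne_zero c), natDegree_X_sub_C]
  omega

theorem rk_mul_le [IsAlgClosed K] (a : End K V) {m : K[X]} {N : ℕ} (hm : aeval a m = 0)
    (hm0 : m ≠ 0) (hN : m.natDegree = N)
    (hmin : ∀ p : K[X], p ≠ 0 → aeval a p = 0 → N ≤ p.natDegree) (d : ℕ) :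
    ∀ f g : K[X], g.natDegree = d → f * g ∣ m → rk a (f * g) + d ≤ rk a f := by
  induction d with
  | zero =>
    intro f g hg h
    rw [add_zero]
    apply Submodule.finrank_mono
    rw [map_mul]
    exact LinearMap.range_comp_le_range _ _
  | succ d ih =>
    intro f g hg h
    obtain ⟨c, hc⟩ := IsAlgClosed.exists_root g (by
      intro h0
      have := natDegree_eq_of_degree_eq_some (n := 0) h0
      omega)
    obtain ⟨g', rfl⟩ := dvd_iff_isRoot.2 hc
    have hg'0 : g' ≠ 0 := by rintro rfl; simp at hg
    have hd : g'.natDegree = d := by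
      rw [natDegree_mul (X_sub_C_ne_zero c) hg'0, natDegree_X_sub_C] at hg
      omega
    rw [← mul_assoc] at h ⊢
    have h1 := ih _ g' hd h
    have h2 := rk_strict a hm hm0 hN hmin (dvd_of_mul_right_dvd h)
    omega


theorem exists_drop [IsAlgClosed K] {S : Set (End K V)} (hI : Irr S) {n : ℕ}
    (hn : finrank K V = n) (hn2 : 2 ≤ n) {a : End K V} (ha : a ∈ S) {m : K[X]}
    (hm : aeval a m = 0) (hm0 : m ≠ 0) (hN : m.natDegree = n - 1)
    {Y : End K V} (hY : PP S (2 * n - 3) Y) (d : ℕ) :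
    ∀ q : K[X], q ∣ m → q.natDegree + d = n - 1 → aeval a q * Y ≠ 0 →
    ∃ f : K[X], ∃ c : K, q ∣ f ∧ f * (X - C c) ∣ m ∧ rk a (f * (X - C c)) + 2 ≤ rk a f := by
  induction d with
  | zero =>
    rintro q ⟨h, rfl⟩ hd hq
    exfalso
    have hh : h ≠ 0 := right_ne_zero_of_mul hm0
    have hq0 : q ≠ 0 := left_ne_zero_of_mul hm0
    rw [natDegree_mul hq0 hh] at hN
    rw [eq_C_of_natDegree_eq_zero (show h.natDegree = 0 by omega)] at hh hm
    rw [mul_comm, map_mul, aeval_C] at hm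
    have hc : h.coeff 0 ≠ 0 := fun h0 => hh (by rw [h0, C_0])
    apply hq
    rw [Algebra.algebraMap_eq_smul_one, smul_mul_assoc, one_mul] at hm
    rw [(smul_eq_zero.1 hm).resolve_left hc, zero_mul]
  | succ d ih =>
    rintro q ⟨h, hqh⟩ hd hq
    have hh : h ≠ 0 := by rintro rfl; exact hm0 (by simpa using hqh)
    have hq0 : q ≠ 0 := by rintro rfl; exact hm0 (by simpa using hqh)
    have hdeg : q.natDegree + h.natDegree = n - 1 := by rw [← hN, hqh, natDegree_mul hq0 hh]
    obtain ⟨c, hc⟩ := IsAlgClosed.exists_root h (by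
      intro h0
      have := natDegree_eq_of_degree_eq_some (n := 0) h0
      omega)
    obtain ⟨g, hg⟩ := dvd_iff_isRoot.2 hc
    have hdvd : q * (X - C c) ∣ m := ⟨g, by rw [hqh, hg, mul_assoc]⟩
    by_cases hz : aeval a (q * (X - C c)) * Y = 0
    · refine ⟨q, c, dvd_rfl, hdvd, ?_⟩
      rw [← rk_drop a q c]
      have hP : PP S (n - 1) (aeval a q * Y) :=
        PP.aeval ha (d := n - 2) (hY.mono (by omega)) q (by omega)
      have h2 := two_le_of_PP hI (by omega) hP hq
      have h3 : LinearMap.range (aeval a q * Y) ≤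
          (LinearMap.range (aeval a q) ⊓ LinearMap.ker (aeval a (X - C c)) : Submodule K V) := by
        rintro _ ⟨v, rfl⟩
        refine ⟨⟨Y v, rfl⟩, ?_⟩
        have := congrArg (fun T : End K V => T v) hz
        rw [mul_comm, map_mul, mul_assoc] at this
        exact this
      have h4 := Submodule.finrank_mono h3
      omega
    · obtain ⟨f, c', h1, h2, h3⟩ := ih (q * (X - C c)) hdvd (by
        rw [natDegree_mul hq0 (X_sub_C_ne_zero c), natDegree_X_sub_C]; omega) hz
      exact ⟨f, c', dvd_of_mul_right_dvd h1, h2, h3⟩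

theorem main_abs_three [IsAlgClosed K] {S : Set (End K V)} (hI : Irr S) {n : ℕ}
    (hn : finrank K V = n) (hn3 : 3 ≤ n) {a : End K V} (ha : a ∈ S) {m : K[X]}
    (hm : aeval a m = 0) (hm0 : m ≠ 0) (hN : m.natDegree = n - 1)
    (hmin : ∀ p : K[X], p ≠ 0 → aeval a p = 0 → n - 1 ≤ p.natDegree)
    {Y : End K V} (hY : PP S (2 * n - 2) Y) : Y = 0 := by
  by_contra hY0
  have hrm : rk a m = 0 := by
    unfold rk
    rw [hm, LinearMap.range_zero, finrank_bot]
  have hr1 : rk a 1 = n := by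
    unfold rk
    rw [map_one, Module.End.one_eq_id, LinearMap.range_id, finrank_top, hn]
  have key := fun d => rk_mul_le a hm hm0 hN hmin d
  obtain ⟨f, c, -, hfd, hf2⟩ := exists_drop hI hn (by omega) ha hm hm0 hN
    (hY.mono (by omega)) (n - 1) 1 (one_dvd _) (by simp) (by simpa using hY0)
  -- the eigenspace of `c` has dimension exactly two
  have hXm : X - C c ∣ m := dvd_of_mul_left_dvd hfd
  have hdr1 := rk_drop a 1 c
  have hdrf := rk_drop a f c
  have hmono : finrank K (LinearMap.range (aeval a f) ⊓
      LinearMap.ker (aeval a (X - C c)) : Submodule K V) ≤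
      finrank K (LinearMap.ker (aeval a (X - C c))) := Submodule.finrank_mono inf_le_right
  have htop : (LinearMap.range (aeval a (1 : K[X])) ⊓
      LinearMap.ker (aeval a (X - C c)) : Submodule K V) = LinearMap.ker (aeval a (X - C c)) := by
    rw [map_one, Module.End.one_eq_id, LinearMap.range_id, top_inf_eq]
  rw [htop, one_mul, hr1] at hdr1
  have hker2 : finrank K (LinearMap.ker (aeval a (X - C c))) ≤ 2 := by
    obtain ⟨g, hg⟩ := hXm
    have hg0 : g ≠ 0 := by rintro rfl; exact hm0 (by simpa using hg)
    have h1 := key g.natDegree (X - C c) g rfl (by rw [← hg])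
    have h2 : 1 + g.natDegree = n - 1 := by
      rw [← hN, hg, natDegree_mul (X_sub_C_ne_zero c) hg0, natDegree_X_sub_C]
    omega
  -- every element of the orthogonal complement is killed by `a - c`
  have hkill : ∀ Z : End K V, PP S (2 * n - 3) Z → aeval a (X - C c) * Z = 0 := by
    intro Z hZ
    by_contra hZ0
    obtain ⟨f', c', ⟨q, hq⟩, hfd', hf2'⟩ := exists_drop hI hn (by omega) ha hm hm0 hN hZ (n - 2)
      (X - C c) hXm (by rw [natDegree_X_sub_C]; omega) hZ0
    obtain ⟨g, hg⟩ := hfd'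
    have hg0 : g ≠ 0 := by rintro rfl; exact hm0 (by simpa using hg)
    have hq0 : q ≠ 0 := by rintro rfl; exact hm0 (by simpa [hq] using hg)
    have h1 := key g.natDegree _ g rfl (by rw [← hg])
    rw [← hg] at h1
    have h2 := key q.natDegree (X - C c) q rfl (by
      rw [← hq, hg, mul_assoc]; exact dvd_mul_right _ _)
    rw [← hq] at h2
    have h3 : 1 + q.natDegree + 1 + g.natDegree = n - 1 := by
      rw [← hN, hg, hq, natDegree_mul (mul_ne_zero (mul_ne_zero (X_sub_C_ne_zero c) hq0)
        (X_sub_C_ne_zero c')) hg0, natDegree_mul (mul_ne_zero (X_sub_C_ne_zero c) hq0)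
        (X_sub_C_ne_zero c'), natDegree_mul (X_sub_C_ne_zero c) hq0, natDegree_X_sub_C,
        natDegree_X_sub_C]
    omega
  have hle : ∀ Z : End K V, PP S (2 * n - 3) Z →
      LinearMap.range Z ≤ LinearMap.ker (aeval a (X - C c)) := by
    rintro Z hZ _ ⟨v, rfl⟩
    exact congrArg (fun T : End K V => T v) (hkill Z hZ)
  have hYr := two_le_of_PP hI (k := 2 * n - 2) (by omega) hY hY0
  have heq : LinearMap.range Y = LinearMap.ker (aeval a (X - C c)) :=
    Submodule.eq_of_le_of_finrank_le (hle Y (hY.mono (by omega))) (by omega)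
  rcases hI (LinearMap.range Y) (by
    rintro B hB _ ⟨v, rfl⟩
    have hBY : PP S (2 * n - 3) (B * Y) :=
      PP.mul (by rwa [show 2 * n - 3 + 1 = 2 * n - 2 by omega]) hB
    rw [heq]
    exact hle _ hBY ⟨v, rfl⟩) with h | h
  · rw [h, finrank_bot] at hYr
    omega
  · rw [← heq, h, finrank_top] at hker2
    omega

theorem main_abs_two [IsAlgClosed K] {S : Set (End K V)} (hI : Irr S)
    (hn : finrank K V = 2) {Y : End K V} (hY : PP S 2 Y) : Y = 0 := by
  by_contra hY0
  have : Nontrivial V := Module.nontrivial_of_finrank_pos (R := K) (by omega)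
  have hYr := two_le_of_PP hI (k := 2) (by omega) hY hY0
  have hsurj : LinearMap.range Y = ⊤ :=
    Submodule.eq_top_of_finrank_eq (le_antisymm (Submodule.finrank_le _) (by omega))
  have hsc : ∀ B ∈ S, ∃ c : K, ∀ v, B v = c • v := by
    intro B hB
    obtain ⟨c, hc⟩ := Module.End.exists_eigenvalue B
    refine ⟨c, ?_⟩
    obtain ⟨x, hx⟩ := hc.exists_hasEigenvector
    have hBx : B x = c • x := hx.apply_eq_smul
    have hP : PP S 1 (B * Y + (-c) • Y) := (PP.mul hY hB).add ((hY.mono (by omega)).smul _)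
    have hz : B * Y + (-c) • Y = 0 := by
      by_contra h0
      have h2 := two_le_of_PP hI (k := 1) (by omega) hP h0
      have h3 := LinearMap.finrank_range_add_finrank_ker (B * Y + (-c) • Y)
      obtain ⟨y, hy⟩ : x ∈ LinearMap.range Y := by rw [hsurj]; trivial
      have h4 : LinearMap.ker (B * Y + (-c) • Y) = ⊥ := by
        rw [← Submodule.finrank_eq_zero (R := K)]; omega
      have h5 : y ∈ LinearMap.ker (B * Y + (-c) • Y) := by
        simp [LinearMap.mem_ker, hy, hBx]
      rw [h4] at h5
      have : y = 0 := by simpa using h5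
      rw [this, map_zero] at hy
      exact hx.2 hy.symm
    intro v
    obtain ⟨y, rfl⟩ : v ∈ LinearMap.range Y := by rw [hsurj]; trivial
    have := congrArg (fun T : End K V => T y) hz
    simp only [LinearMap.add_apply, Module.End.mul_apply, LinearMap.smul_apply,
      LinearMap.zero_apply, neg_smul] at this
    exact eq_of_sub_eq_zero (by rw [sub_eq_add_neg]; exact this)
  obtain ⟨x, hx⟩ := exists_ne (0 : V)
  have h1 : finrank K (K ∙ x) = 1 := finrank_span_singleton hx
  rcases hI (K ∙ x) (by
    intro B hB u hu
    obtain ⟨c, hc⟩ := hsc B hB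
    rw [hc]
    exact Submodule.smul_mem _ _ hu) with h | h
  · rw [h, finrank_bot] at h1; omega
  · rw [h, finrank_top] at h1; omega

end abs

section transfer

/-- Base change of a matrix to a field extension, as an endomorphism. -/
noncomputable def bc (F K : Type*) [Field F] [Field K] [Algebra F K] (n : ℕ) :
    Matrix (Fin n) (Fin n) F →+* End K (Fin n → K) :=
  ((Matrix.toLinAlgEquiv' : Matrix (Fin n) (Fin n) K ≃ₐ[K] _) :
    Matrix (Fin n) (Fin n) K →+* End K (Fin n → K)).comp (algebraMap F K).mapMatrix

variable {F K : Type*} [Field F] [Field K] [Algebra F K] {n : ℕ}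

theorem bc_eq (M : Matrix (Fin n) (Fin n) F) :
    bc F K n M = Matrix.toLin' (M.map (algebraMap F K)) := rfl

theorem bc_smul (c : F) (M : Matrix (Fin n) (Fin n) F) :
    bc F K n (c • M) = algebraMap F K c • bc F K n M := by
  rw [bc_eq, bc_eq, ← map_smul]
  congr 1
  ext i j
  simp

theorem bc_trace (M : Matrix (Fin n) (Fin n) F) :
    LinearMap.trace K _ (bc F K n M) = algebraMap F K M.trace := by
  rw [bc_eq, Matrix.trace_toLin'_eq]
  simp [Matrix.trace, map_sum]

theorem bc_irr {S : Set (Matrix (Fin n) (Fin n) F)} (hS : IsGeneratingSystem F S) :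
    Irr (bc F K n '' S) := by
  intro U hU
  have hall : ∀ M : Matrix (Fin n) (Fin n) F, ∀ u ∈ U, bc F K n M u ∈ U := by
    intro M
    obtain ⟨i, hi⟩ := hS M
    refine Submodule.span_induction (p := fun M _ => ∀ u ∈ U, bc F K n M u ∈ U) ?_ ?_ ?_ ?_ hi
    · rintro _ ⟨l, -, hl, rfl⟩
      clear hi
      induction l with
      | nil => intro u hu; simpa using hu
      | cons B l ih =>
        intro u hu
        rw [List.prod_cons, map_mul]
        exact hU _ ⟨B, hl B (by simp), rfl⟩ _ (ih (fun a ha => hl a (by simp [ha])) u hu)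
    · intro u hu; simp
    · intro x y _ _ hx hy u hu
      rw [map_add]
      exact U.add_mem (hx u hu) (hy u hu)
    · intro c x _ hx u hu
      rw [bc_smul]
      exact U.smul_mem _ (hx u hu)
  by_cases h : U = ⊥
  · exact Or.inl h
  right
  obtain ⟨u, hu, hu0⟩ := Submodule.exists_mem_ne_zero_of_ne_bot h
  obtain ⟨j, hj⟩ : ∃ j, u j ≠ 0 := by
    by_contra! hh
    exact hu0 (funext hh)
  have hs : ∀ i, Pi.single i (1 : K) ∈ U := by
    intro i
    have h1 := U.smul_mem (u j)⁻¹ (hall (Matrix.single i j 1) u hu)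
    convert h1 using 1
    rw [bc_eq, Matrix.toLin'_apply]
    ext k
    by_cases hk : k = i
    · subst hk
      simp [Matrix.mulVec, dotProduct, Matrix.single, hj]
    · simp [Matrix.mulVec, dotProduct, Matrix.single, hk, Ne.symm hk]
  rw [eq_top_iff]
  intro v _
  rw [← (Pi.basisFun K (Fin n)).sum_repr v]
  exact U.sum_mem fun i _ => U.smul_mem _ (by simpa using hs i)

theorem bc_aeval (p : F[X]) (M : Matrix (Fin n) (Fin n) F) :
    aeval (bc F K n M) (p.map (algebraMap F K)) = bc F K n (aeval M p) := by
  induction p using Polynomial.induction_on' with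
  | add p q hp hq => simp [hp, hq]
  | monomial i c =>
    rw [map_monomial, aeval_monomial, aeval_monomial, ← Algebra.smul_def, ← Algebra.smul_def, bc_smul, map_pow]

theorem bc_min (M : Matrix (Fin n) (Fin n) F) (p : K[X]) (hp : p ≠ 0)
    (h : aeval (bc F K n M) p = 0) : (minpoly F M).natDegree ≤ p.natDegree := by
  obtain ⟨θ, hθ⟩ : ∃ θ : K →ₗ[F] F, θ p.leadingCoeff ≠ 0 := by
    by_contra! hh
    exact hp (leadingCoeff_eq_zero.1 ((Module.forall_dual_apply_eq_zero_iff F _).1 hh))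
  let q : F[X] := ∑ i ∈ Finset.range (p.natDegree + 1), monomial i (θ (p.coeff i))
  have hqc : q.coeff p.natDegree = θ p.leadingCoeff := by
    simp [q, coeff_monomial]
  have hq0 : q ≠ 0 := by
    intro h0
    rw [h0, coeff_zero] at hqc
    exact hθ hqc.symm
  have hqd : q.natDegree ≤ p.natDegree := by
    apply natDegree_sum_le_of_forall_le
    intro i hi
    exact (natDegree_monomial_le _).trans (by have := Finset.mem_range.1 hi; omega)
  have hz : aeval M q = 0 := by
    have hmat : ∑ i ∈ Finset.range (p.natDegree + 1),
        p.coeff i • (M ^ i).map (algebraMap F K) = 0 := by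
      apply Matrix.toLin'.injective
      rw [map_sum, map_zero, ← h, aeval_eq_sum_range]
      refine Finset.sum_congr rfl fun i _ => ?_
      rw [map_smul, ← bc_eq, map_pow]
    ext r s
    have h1 := congrArg (fun T : Matrix (Fin n) (Fin n) K => θ (T r s)) hmat
    simp only [Matrix.sum_apply, Matrix.smul_apply, Matrix.map_apply, Matrix.zero_apply, map_zero,
      map_sum, smul_eq_mul] at h1
    rw [Matrix.zero_apply, ← h1]
    simp only [q, map_sum, aeval_monomial, Matrix.sum_apply]
    refine Finset.sum_congr rfl fun i _ => ?_
    rw [mul_comm (p.coeff i), ← Algebra.smul_def, ← Algebra.smul_def, map_smul,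
      Matrix.smul_apply, smul_eq_mul, smul_eq_mul, mul_comm]
  exact (natDegree_le_natDegree (minpoly.degree_le_of_ne_zero F M hq0 hz)).trans hqd

end transfer

theorem length_le_of_minpoly_deg_pred_mem
    (F : Type*) [Field F] (n : ℕ) (hn : 2 ≤ n)
    (S : Finset (Matrix (Fin n) (Fin n) F))
    (hgen : IsGeneratingSystem F (S : Set (Matrix (Fin n) (Fin n) F)))
    (hA : ∃ M ∈ S, (minpoly F M).natDegree = n - 1) :
    genLength F (S : Set (Matrix (Fin n) (Fin n) F)) ≤ 2 * n - 2 := by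
  apply Nat.sInf_le
  by_contra htop
  obtain ⟨φ, hφ0, hφ⟩ := Submodule.exists_le_ker_of_lt_top _ (lt_top_iff_ne_top.2 htop)
  -- the functional `φ` is `tr (Y * ·)`
  let Y : Matrix (Fin n) (Fin n) F := Matrix.of fun i j => φ (Matrix.single j i 1)
  have hφY : ∀ w, φ w = (Y * w).trace := by
    intro w
    conv_lhs => rw [Matrix.matrix_eq_sum_single w]
    simp only [map_sum, Matrix.trace, Matrix.diag, Matrix.mul_apply, Y, Matrix.of_apply]
    rw [Finset.sum_comm]
    refine Finset.sum_congr rfl fun i _ => Finset.sum_congr rfl fun j _ => ?_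
    rw [mul_comm, ← smul_eq_mul, ← map_smul, Matrix.smul_single, smul_eq_mul, mul_one]
  obtain ⟨M, hMS, hM⟩ := hA
  let K := AlgebraicClosure F
  have hI : Irr (bc F K n '' (S : Set (Matrix (Fin n) (Fin n) F))) := bc_irr hgen
  have hP : PP (bc F K n '' (S : Set (Matrix (Fin n) (Fin n) F))) (2 * n - 2) (bc F K n Y) := by
    intro l hl hlS
    obtain ⟨l', hl', rfl⟩ : ∃ l' : List (Matrix (Fin n) (Fin n) F),
        (∀ a ∈ l', a ∈ (S : Set (Matrix (Fin n) (Fin n) F))) ∧ l'.map (bc F K n) = l := by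
      clear hl
      induction l with
      | nil => exact ⟨[], by simp, rfl⟩
      | cons B l ih =>
        obtain ⟨l', h1, rfl⟩ := ih (fun a ha => hlS a (by simp [ha]))
        obtain ⟨b, hb, rfl⟩ := hlS B (by simp)
        refine ⟨b :: l', ?_, rfl⟩
        intro a ha
        rcases List.mem_cons.1 ha with rfl | h
        · exact hb
        · exact h1 a h
    rw [← map_list_prod, ← map_mul, bc_trace, ← hφY]
    have : φ l'.prod = 0 := hφ (Submodule.subset_span ⟨l', by simpa using hl, hl', rfl⟩)
    rw [this, map_zero]
  have hfr : finrank K (Fin n → K) = n := by simp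
  have hY0 : bc F K n Y = 0 := by
    rcases eq_or_lt_of_le hn with h2 | h3
    · subst h2
      exact main_abs_two hI hfr hP
    · have hm0 : minpoly F M ≠ 0 := minpoly.ne_zero (Matrix.isIntegral M)
      refine main_abs_three hI hfr h3 ⟨M, hMS, rfl⟩ (m := (minpoly F M).map (algebraMap F K))
        ?_ ?_ ?_ ?_ hP
      · rw [bc_aeval, minpoly.aeval, map_zero]
      · exact (Polynomial.map_ne_zero_iff (algebraMap F K).injective).2 hm0
      · rw [natDegree_map, hM]
      · intro p hp hp0
        rw [← hM]
        exact bc_min M p hp hp0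
  apply hφ0
  ext1 w
  apply (algebraMap F K).injective
  rw [hφY, ← bc_trace, map_mul, hY0, zero_mul]
  simp
end
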